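/- arXiv:math/0406500 — 3 statements merged into one kernel-verified Lean document; each statement's English description precedes it below -/
import Mathlib

section
/- Let n < p be positive integers and set q = p − n + 1. Let f_1, …, f_q ∈ ℂ[x_1,…,x_{n−1},z] be polynomials such that each f_j is weighted homogeneous of degree d_j with respect to positive integer weights (w_1,…,w_{n−1},w_n). Let P = (r_1,…,r_ℓ) be a partition of k satisfying p − k(p−n+1) + ℓ = 0, and let I(f,P) ⊆ ℂ[x_1,…,x_{n−1},z_1,…,z_ℓ] be the ideal generated by the polynomials π_P(V_i^k(f_j)) for 1 ≤ i ≤ k−1 and 1 ≤ j ≤ q. If the quotient ring ℂ[x_1,…,x_{n−1},z_1,…,z_ℓ]/I(f,P) is finite-dimensional as a ℂ-vector space, then w_1⋯w_{n−1}·w_n^ℓ · dim_ℂ (ℂ[x_1,…,x_{n−1},z_1,…,z_ℓ]/I(f,P)) = ∏_{j=1}^{q} ∏_{i=1}^{k−1} (d_j − i·w_n). -/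
open MvPolynomial

/-- The `k×k` matrix whose `(a,b)` entry is `z_a^b` for `b ≠ i` and is
`g(x₁,…,x_{n−1},z_a)` for `b = i`. -/
noncomputable def Mmat {n k : ℕ} (g : MvPolynomial (Fin (n - 1) ⊕ Unit) ℂ) (i : Fin k) :
    Matrix (Fin k) (Fin k) (MvPolynomial (Fin (n - 1) ⊕ Fin k) ℂ) :=
  fun a b =>
    if b = i then rename (Sum.map id fun _ => a) g
    else (X (Sum.inr a) : MvPolynomial (Fin (n - 1) ⊕ Fin k) ℂ) ^ (b : ℕ)

/-- The Vandermonde determinant `∏_{a<b} (z_b − z_a)`. -/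
noncomputable def Vdm (n k : ℕ) : MvPolynomial (Fin (n - 1) ⊕ Fin k) ℂ :=
  ∏ p ∈ Finset.univ.filter (fun p : Fin k × Fin k => p.1 < p.2),
    (X (Sum.inr p.2) - X (Sum.inr p.1))

namespace WBez

variable {σ : Type*} (w : σ → ℕ)

lemma decomp (a : MvPolynomial σ ℂ) :
    ∃ B, ∀ C, B ≤ C → a = ∑ n ∈ Finset.range C, weightedHomogeneousComponent w n a := by
  refine ⟨weightedTotalDegree w a + 1, fun C hC => ?_⟩
  conv_lhs => rw [← finsum_weightedHomogeneousComponent w a]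
  refine finsum_eq_sum_of_support_subset _ ?_
  intro n hn
  by_contra h
  apply hn
  apply weightedHomogeneousComponent_eq_zero
  simp at h
  omega

lemma whc_mul {g : MvPolynomial σ ℂ} {d : ℕ} (hg : IsWeightedHomogeneous w g d)
    (a : MvPolynomial σ ℂ) (m : ℕ) :
    weightedHomogeneousComponent w (m + d) (g * a) =
      g * weightedHomogeneousComponent w m a := by
  obtain ⟨B, hB⟩ := decomp w a
  have h := hB (max B (m+1)) (le_max_left _ _)
  conv_lhs => rw [h]
  rw [Finset.mul_sum, map_sum, Finset.sum_eq_single m]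
  · apply IsWeightedHomogeneous.weightedHomogeneousComponent_same
    rw [add_comm m d]
    exact hg.mul (weightedHomogeneousComponent_isWeightedHomogeneous m a)
  · intro b _ hb
    refine IsWeightedHomogeneous.weightedHomogeneousComponent_ne (m := d + b) _ ?_ ?_
    · exact hg.mul (weightedHomogeneousComponent_isWeightedHomogeneous b a)
    · omega
  · intro hm
    simp at hm

lemma whc_mul_lt {g : MvPolynomial σ ℂ} {d : ℕ} (hg : IsWeightedHomogeneous w g d)
    (a : MvPolynomial σ ℂ) (m : ℕ) (hm : m < d) :
    weightedHomogeneousComponent w m (g * a) = 0 := by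
  obtain ⟨B, hB⟩ := decomp w a
  conv_lhs => rw [hB B le_rfl]
  rw [Finset.mul_sum, map_sum, Finset.sum_eq_zero]
  intro b _
  refine IsWeightedHomogeneous.weightedHomogeneousComponent_ne (m := d + b) _ ?_ ?_
  · exact hg.mul (weightedHomogeneousComponent_isWeightedHomogeneous b a)
  · omega

/-- Homogeneous ideals. -/
def HI (I : Ideal (MvPolynomial σ ℂ)) : Prop :=
  ∀ a ∈ I, ∀ n, weightedHomogeneousComponent w n a ∈ I

variable {w}

lemma HI.mem {I : Ideal (MvPolynomial σ ℂ)} {a : MvPolynomial σ ℂ}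
    (h : ∀ n, weightedHomogeneousComponent w n a ∈ I) : a ∈ I := by
  obtain ⟨B, hB⟩ := decomp w a
  rw [hB B le_rfl]
  exact Ideal.sum_mem _ fun n _ => h n

lemma HI_bot : HI w (⊥ : Ideal (MvPolynomial σ ℂ)) := by
  intro a ha n
  simp at ha
  simp [ha]

lemma mem_sup_span {R : Type*} [CommRing R] {I : Ideal R} {g a : R} :
    a ∈ I ⊔ Ideal.span {g} ↔ ∃ i ∈ I, ∃ b, a = i + g * b := by
  rw [Submodule.mem_sup]
  constructor
  · rintro ⟨i, hi, z, hz, rfl⟩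
    obtain ⟨b, rfl⟩ := Ideal.mem_span_singleton'.1 hz
    exact ⟨i, hi, b, by ring⟩
  · rintro ⟨i, hi, b, rfl⟩
    exact ⟨i, hi, g * b, Ideal.mem_span_singleton'.2 ⟨b, by ring⟩, rfl⟩

lemma HI.sup {I : Ideal (MvPolynomial σ ℂ)} (hI : HI w I) {g : MvPolynomial σ ℂ} {d : ℕ}
    (hg : IsWeightedHomogeneous w g d) : HI w (I ⊔ Ideal.span {g}) := by
  intro a ha n
  obtain ⟨i, hi, b, rfl⟩ := mem_sup_span.1 ha
  rw [map_add]
  rcases lt_or_ge n d with h | h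
  · rw [whc_mul_lt w hg b n h, add_zero]
    exact Submodule.mem_sup_left (hI i hi n)
  · obtain ⟨m, rfl⟩ := Nat.exists_eq_add_of_le' h
    rw [whc_mul w hg b m]
    exact mem_sup_span.2 ⟨_, hI i hi _, _, rfl⟩

/-- `g` is a nonzerodivisor modulo `I`. -/
def Reg {R : Type*} [CommRing R] (I : Ideal R) (g : R) : Prop := ∀ a, g * a ∈ I → a ∈ I

/-- Regular sequences modulo `I`. -/
def RegSeq {R : Type*} [CommRing R] : Ideal R → List R → Prop
  | _, [] => True
  | I, g :: l => Reg I g ∧ RegSeq (I ⊔ Ideal.span {g}) l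

lemma swap_aux {I : Ideal (MvPolynomial σ ℂ)} (hI : HI w I) {x y : MvPolynomial σ ℂ} {d : ℕ}
    (hd : 0 < d) (hx : IsWeightedHomogeneous w x d) (h1 : Reg I x)
    (h2 : Reg (I ⊔ Ideal.span {x}) y) : Reg I y := by
  have key : ∀ N : ℕ, ∀ a, y * a ∈ I → a ∈ I ⊔ Ideal.span {x ^ N} := by
    intro N
    induction N with
    | zero => intro a _; simp
    | succ N ih =>
      intro a ha
      obtain ⟨i, hi, b, hb⟩ := mem_sup_span.1 (h2 a (Submodule.mem_sup_left ha))
      have hyb : y * b ∈ I := by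
        apply h1
        have : x * (y * b) = y * a - y * i := by rw [hb]; ring
        rw [this]
        exact I.sub_mem ha (I.mul_mem_left _ hi)
      obtain ⟨i', hi', c, hc⟩ := mem_sup_span.1 (ih b hyb)
      refine mem_sup_span.2 ⟨i + x * i', I.add_mem hi (I.mul_mem_left _ hi'), c, ?_⟩
      rw [hb, hc]; ring
  intro a ha
  refine HI.mem (w := w) fun n => ?_
  obtain ⟨i, hi, b, hb⟩ := mem_sup_span.1 (key (n+1) a ha)
  rw [hb, map_add, whc_mul_lt w (hx.pow (n+1)) b n, add_zero]
  · exact hI i hi n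
  · simp; nlinarith

lemma swap_aux2 {R : Type*} [CommRing R] {I : Ideal R} {x y : R}
    (h1 : Reg I x) (h2 : Reg (I ⊔ Ideal.span {x}) y) : Reg (I ⊔ Ideal.span {y}) x := by
  intro a ha
  obtain ⟨i, hi, b, hb⟩ := mem_sup_span.1 ha
  have : b ∈ I ⊔ Ideal.span {x} := by
    apply h2
    exact mem_sup_span.2 ⟨-i, I.neg_mem hi, a, by rw [hb]; ring⟩
  obtain ⟨i', hi', c, hc⟩ := mem_sup_span.1 this
  refine mem_sup_span.2 ⟨a - y * c, h1 _ ?_, c, by ring⟩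
  have : x * (a - y * c) = i + y * i' := by rw [mul_sub, hb, hc]; ring
  rw [this]
  exact I.add_mem hi (I.mul_mem_left _ hi')

/-- positive-degree homogeneous -/
def PH (w : σ → ℕ) (g : MvPolynomial σ ℂ) : Prop := ∃ d, 0 < d ∧ IsWeightedHomogeneous w g d

lemma RegSeq.perm {l l' : List (MvPolynomial σ ℂ)} (h : l.Perm l') :
    ∀ {I : Ideal (MvPolynomial σ ℂ)}, HI w I → (∀ g ∈ l, PH w g) → RegSeq I l → RegSeq I l' := by
  induction h with
  | nil => intro I _ _ h; exact h
  | cons x _ ih =>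
    intro I hI hl h
    obtain ⟨d, hd, hx⟩ := hl x (by simp)
    exact ⟨h.1, ih (hI.sup hx) (fun g hg => hl g (by simp [hg])) h.2⟩
  | swap x y l =>
    intro I hI hl h
    obtain ⟨d, hd, hy⟩ := hl y (by simp)
    refine ⟨swap_aux hI hd hy h.1 h.2.1, swap_aux2 h.1 h.2.1, ?_⟩
    have := h.2.2
    rwa [sup_right_comm] at this
  | trans h1 h2 ih1 ih2 =>
    intro I hI hl h
    exact ih2 hI (fun g hg => hl g (h1.mem_iff.2 hg)) (ih1 hI hl h)

lemma regSeq_append {R : Type*} [CommRing R] (l : List R) (x : R) : ∀ I : Ideal R,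
    RegSeq I (l ++ [x]) ↔ RegSeq I l ∧ Reg (I ⊔ Ideal.ofList l) x := by
  induction l with
  | nil => intro I; simp [RegSeq]
  | cons y l ih =>
    intro I
    simp only [List.cons_append, RegSeq, ih, Ideal.ofList_cons, ← sup_assoc, and_assoc]

lemma HI.ofList {l : List (MvPolynomial σ ℂ)} : ∀ {I : Ideal (MvPolynomial σ ℂ)}, HI w I →
    (∀ g ∈ l, PH w g) → HI w (I ⊔ Ideal.ofList l) := by
  induction l with
  | nil => intro I hI _; simpa using hI
  | cons x l ih =>
    intro I hI hl
    obtain ⟨d, hd, hx⟩ := hl x (by simp)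
    rw [Ideal.ofList_cons, ← sup_assoc]
    exact ih (hI.sup hx) fun g hg => hl g (by simp [hg])

lemma reg_of_pow {R : Type*} [CommRing R] {I : Ideal R} {x h : R} (hx : Reg I x)
    (hr : x ∈ (I ⊔ Ideal.span {h}).radical) : Reg I h := by
  obtain ⟨n, hn⟩ := hr
  intro a ha
  have h1 : x ^ n * a ∈ I := by
    obtain ⟨i, hi, b, hb⟩ := mem_sup_span.1 hn
    have : x ^ n * a = a * i + b * (h * a) := by rw [hb]; ring
    rw [this]
    exact I.add_mem (I.mul_mem_left _ hi) (I.mul_mem_left _ ha)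
  clear hn
  induction n with
  | zero => simpa using h1
  | succ n ih => exact ih (hx _ (by rw [← mul_assoc, ← pow_succ']; exact h1))

section Hilb

variable (w)

/-- The degree `n` part of `S / I`. -/
noncomputable def Qn (I : Ideal (MvPolynomial σ ℂ)) (n : ℕ) :
    Submodule ℂ (MvPolynomial σ ℂ ⧸ I) :=
  (weightedHomogeneousSubmodule ℂ w n).map (Ideal.Quotient.mkₐ ℂ I).toLinearMap

/-- The Hilbert function of `S / I`. -/
noncomputable def Hf (I : Ideal (MvPolynomial σ ℂ)) (n : ℕ) : ℕ := Module.finrank ℂ (Qn w I n)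

variable {w}

lemma mem_Qn {I : Ideal (MvPolynomial σ ℂ)} {n : ℕ} {y : MvPolynomial σ ℂ ⧸ I} :
    y ∈ Qn w I n ↔ ∃ a, IsWeightedHomogeneous w a n ∧ Ideal.Quotient.mk I a = y := Iff.rfl

lemma Qn_finite [Finite σ] (hw : ∀ i, 0 < w i) (I : Ideal (MvPolynomial σ ℂ)) (n : ℕ) :
    Module.Finite ℂ (Qn w I n) := by
  rw [Module.Finite.iff_fg]
  exact (weightedHomogeneousSubmodule_fg ℂ w (fun x => (hw x).ne') n).map _

lemma Hf_eq_zero_iff [Finite σ] (hw : ∀ i, 0 < w i) (I : Ideal (MvPolynomial σ ℂ)) (n : ℕ) :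
    Hf w I n = 0 ↔ ∀ a, IsWeightedHomogeneous w a n → a ∈ I := by
  have := Qn_finite hw I n
  rw [Hf, Submodule.finrank_eq_zero, Submodule.eq_bot_iff]
  constructor
  · intro h a ha
    exact Ideal.Quotient.eq_zero_iff_mem.1 (h _ (mem_Qn.2 ⟨a, ha, rfl⟩))
  · rintro h _ ⟨a, ha, rfl⟩
    exact Ideal.Quotient.eq_zero_iff_mem.2 (h a ha)

/-- projection `S/I → S/(I+g)` -/
noncomputable def tau (I : Ideal (MvPolynomial σ ℂ)) (g : MvPolynomial σ ℂ) :
    (MvPolynomial σ ℂ ⧸ I) →ₗ[ℂ] (MvPolynomial σ ℂ ⧸ (I ⊔ Ideal.span {g})) :=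
  (Ideal.Quotient.factorₐ ℂ (le_sup_left : I ≤ I ⊔ Ideal.span {g})).toLinearMap

lemma tau_mk (I : Ideal (MvPolynomial σ ℂ)) (g a : MvPolynomial σ ℂ) :
    tau I g (Ideal.Quotient.mk I a) = Ideal.Quotient.mk _ a := rfl

lemma Qn_map_tau (I : Ideal (MvPolynomial σ ℂ)) (g : MvPolynomial σ ℂ) (n : ℕ) :
    (Qn w I n).map (tau I g) = Qn w (I ⊔ Ideal.span {g}) n := by
  ext y
  simp only [Submodule.mem_map, mem_Qn]
  constructor
  · rintro ⟨_, ⟨a, ha, rfl⟩, rfl⟩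
    exact ⟨a, ha, rfl⟩
  · rintro ⟨a, ha, rfl⟩
    exact ⟨_, ⟨a, ha, rfl⟩, rfl⟩

lemma finrank_map_add {V W : Type*} [AddCommGroup V] [Module ℂ V] [AddCommGroup W] [Module ℂ W]
    (f : V →ₗ[ℂ] W) (p : Submodule ℂ V) [Module.Finite ℂ p] :
    Module.finrank ℂ (p.map f) + Module.finrank ℂ (p ⊓ LinearMap.ker f : Submodule ℂ V) =
      Module.finrank ℂ p := by
  have h := LinearMap.finrank_range_add_finrank_ker (f.domRestrict p)
  rw [LinearMap.range_domRestrict, LinearMap.ker_domRestrict] at h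
  rw [← h]
  congr 1
  rw [← Submodule.map_comap_subtype]
  exact (LinearEquiv.finrank_eq
    (Submodule.equivMapOfInjective p.subtype p.injective_subtype _)).symm

lemma Qn_inf_ker {I : Ideal (MvPolynomial σ ℂ)} (hI : HI w I) {g : MvPolynomial σ ℂ} {d : ℕ}
    (hg : IsWeightedHomogeneous w g d) (n : ℕ) :
    Qn w I (n + d) ⊓ LinearMap.ker (tau I g) =
      (Qn w I n).map (LinearMap.mulLeft ℂ (Ideal.Quotient.mk I g)) := by
  ext y
  simp only [Submodule.mem_inf, Submodule.mem_map, mem_Qn, LinearMap.mem_ker]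
  constructor
  · rintro ⟨⟨a, ha, rfl⟩, h⟩
    rw [tau_mk, Ideal.Quotient.eq_zero_iff_mem] at h
    obtain ⟨i, hi, b, hb⟩ := mem_sup_span.1 h
    refine ⟨_, ⟨weightedHomogeneousComponent w n b,
      weightedHomogeneousComponent_isWeightedHomogeneous _ _, rfl⟩, ?_⟩
    rw [LinearMap.mulLeft_apply, ← map_mul, ← whc_mul w hg]
    rw [Ideal.Quotient.eq]
    have h2 := ha.weightedHomogeneousComponent_same
    have : weightedHomogeneousComponent w (n + d) (g * b) - a =
        - weightedHomogeneousComponent w (n + d) i := by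
      conv_lhs => rw [← h2, hb]
      rw [map_add]; ring
    rw [this]
    exact I.neg_mem (hI i hi _)
  · rintro ⟨_, ⟨a, ha, rfl⟩, rfl⟩
    refine ⟨⟨g * a, ?_, by simp⟩, ?_⟩
    · rw [add_comm]; exact hg.mul ha
    · rw [LinearMap.mulLeft_apply, ← map_mul, tau_mk, Ideal.Quotient.eq_zero_iff_mem]
      exact mem_sup_span.2 ⟨0, I.zero_mem, a, by ring⟩

lemma Qn_inf_ker_lt {I : Ideal (MvPolynomial σ ℂ)} (hI : HI w I) {g : MvPolynomial σ ℂ} {d : ℕ}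
    (hg : IsWeightedHomogeneous w g d) (n : ℕ) (hn : n < d) :
    Qn w I n ⊓ LinearMap.ker (tau I g) = ⊥ := by
  rw [Submodule.eq_bot_iff]
  intro y
  simp only [Submodule.mem_inf, mem_Qn, LinearMap.mem_ker]
  rintro ⟨⟨a, ha, rfl⟩, h⟩
  rw [tau_mk, Ideal.Quotient.eq_zero_iff_mem] at h
  obtain ⟨i, hi, b, hb⟩ := mem_sup_span.1 h
  rw [Ideal.Quotient.eq_zero_iff_mem, ← ha.weightedHomogeneousComponent_same, hb, map_add,
    whc_mul_lt w hg b n hn, add_zero]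
  exact hI i hi n

lemma Hf_le [Finite σ] (hw : ∀ i, 0 < w i) {I : Ideal (MvPolynomial σ ℂ)} (hI : HI w I)
    {g : MvPolynomial σ ℂ} {d : ℕ} (hg : IsWeightedHomogeneous w g d) (n : ℕ) :
    Hf w I (n + d) ≤ Hf w (I ⊔ Ideal.span {g}) (n + d) + Hf w I n := by
  have := Qn_finite hw I n
  have := Qn_finite hw I (n + d)
  have h := finrank_map_add (tau I g) (Qn w I (n + d))
  rw [Qn_map_tau, Qn_inf_ker hI hg] at h
  have h2 := Submodule.finrank_map_le (LinearMap.mulLeft ℂ (Ideal.Quotient.mk I g)) (Qn w I n)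
  unfold Hf
  omega

lemma Hf_eq [Finite σ] (hw : ∀ i, 0 < w i) {I : Ideal (MvPolynomial σ ℂ)} (hI : HI w I)
    {g : MvPolynomial σ ℂ} {d : ℕ} (hg : IsWeightedHomogeneous w g d) (hr : Reg I g) (n : ℕ) :
    Hf w I (n + d) = Hf w (I ⊔ Ideal.span {g}) (n + d) + Hf w I n := by
  have := Qn_finite hw I n
  have := Qn_finite hw I (n + d)
  have h := finrank_map_add (tau I g) (Qn w I (n + d))
  rw [Qn_map_tau, Qn_inf_ker hI hg] at h
  have hinj : Function.Injective (LinearMap.mulLeft ℂ (Ideal.Quotient.mk I g)) := by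
    rw [injective_iff_map_eq_zero]
    intro y hy
    obtain ⟨a, rfl⟩ := Ideal.Quotient.mk_surjective y
    rw [LinearMap.mulLeft_apply, ← map_mul, Ideal.Quotient.eq_zero_iff_mem] at hy
    exact Ideal.Quotient.eq_zero_iff_mem.2 (hr a hy)
  have h2 := LinearEquiv.finrank_eq (Submodule.equivMapOfInjective _ hinj (Qn w I n))
  unfold Hf
  omega

lemma Hf_eq_lt [Finite σ] (hw : ∀ i, 0 < w i) {I : Ideal (MvPolynomial σ ℂ)} (hI : HI w I)
    {g : MvPolynomial σ ℂ} {d : ℕ} (hg : IsWeightedHomogeneous w g d) (n : ℕ) (hn : n < d) :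
    Hf w (I ⊔ Ideal.span {g}) n = Hf w I n := by
  have := Qn_finite hw I n
  have h := finrank_map_add (tau I g) (Qn w I n)
  rw [Qn_map_tau, Qn_inf_ker_lt hI hg n hn, finrank_bot] at h
  exact h

variable (w) in
/-- The Hilbert series. -/
noncomputable def HS (I : Ideal (MvPolynomial σ ℂ)) : PowerSeries ℤ :=
  PowerSeries.mk fun n => (Hf w I n : ℤ)

lemma HS_step [Finite σ] (hw : ∀ i, 0 < w i) {I : Ideal (MvPolynomial σ ℂ)} (hI : HI w I)
    {g : MvPolynomial σ ℂ} {d : ℕ} (hg : IsWeightedHomogeneous w g d) (hr : Reg I g) :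
    HS w (I ⊔ Ideal.span {g}) = (1 - PowerSeries.X ^ d) * HS w I := by
  ext n
  rw [sub_mul, one_mul, map_sub, PowerSeries.coeff_X_pow_mul']
  simp only [HS, PowerSeries.coeff_mk]
  split_ifs with h
  · obtain ⟨m, rfl⟩ := Nat.exists_eq_add_of_le' h
    rw [Hf_eq hw hI hg hr m]
    simp
  · rw [Hf_eq_lt hw hI hg n (by omega)]
    simp

lemma HS_list [Finite σ] (hw : ∀ i, 0 < w i) (L : List (MvPolynomial σ ℂ × ℕ)) :
    ∀ {I : Ideal (MvPolynomial σ ℂ)}, HI w I →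
    (∀ p ∈ L, IsWeightedHomogeneous w p.1 p.2) → RegSeq I (L.map Prod.fst) →
    HS w (I ⊔ Ideal.ofList (L.map Prod.fst)) =
      (L.map fun p => (1 - PowerSeries.X ^ p.2 : PowerSeries ℤ)).prod * HS w I := by
  induction L with
  | nil => intro I _ _ _; simp
  | cons p L ih =>
    intro I hI hL hr
    have hp := hL p (by simp)
    simp only [List.map_cons, Ideal.ofList_cons, List.prod_cons]
    rw [← sup_assoc, ih (hI.sup hp) (fun q hq => hL q (by simp [hq])) hr.2,
      HS_step hw hI hp hr.1]
    ring

/-- cofinite ideals -/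
def CF (J : Ideal (MvPolynomial σ ℂ)) : Prop := ∀ i, (X i : MvPolynomial σ ℂ) ∈ J.radical

lemma CF.exists_bound [Fintype σ] (_hw : ∀ i, 0 < w i) {J : Ideal (MvPolynomial σ ℂ)} (h : CF J) :
    ∃ B, ∀ n, B ≤ n → ∀ a, IsWeightedHomogeneous w a n → a ∈ J := by
  choose e he using h
  refine ⟨∑ i, w i * e i + 1, fun n hn a ha => ?_⟩
  rw [← a.support_sum_monomial_coeff]
  refine Ideal.sum_mem _ fun m hm => ?_
  have hwt : Finsupp.weight w m = n := ha (mem_support_iff.1 hm)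
  obtain ⟨i, hi⟩ : ∃ i, e i ≤ m i := by
    by_contra! hcon
    have : Finsupp.weight w m ≤ ∑ i, w i * e i := by
      rw [Finsupp.weight_apply, Finsupp.sum_fintype _ _ (by simp)]
      refine Finset.sum_le_sum fun i _ => ?_
      rw [smul_eq_mul, mul_comm]
      exact Nat.mul_le_mul_left _ (hcon i).le
    omega
  have : monomial m (coeff m a) = monomial (m - Finsupp.single i (e i)) (coeff m a) * X i ^ e i := by
    rw [X_pow_eq_monomial, monomial_mul, mul_one,
      tsub_add_cancel_of_le (Finsupp.single_le_iff.2 hi)]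
  rw [this]
  exact J.mul_mem_left _ (he i)

lemma CF.mem_radical [Fintype σ] (hw : ∀ i, 0 < w i) {J : Ideal (MvPolynomial σ ℂ)} (h : CF J)
    {g : MvPolynomial σ ℂ} (hg : PH w g) : g ∈ J.radical := by
  obtain ⟨B, hB⟩ := h.exists_bound hw
  obtain ⟨d, hd, hg⟩ := hg
  refine ⟨B, hB _ ?_ _ (hg.pow B)⟩
  simp; exact Nat.le_mul_of_pos_right _ hd

lemma CF.mono {J K : Ideal (MvPolynomial σ ℂ)} (h : CF J) (hJK : J ≤ K.radical) : CF K :=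
  fun i => by simpa using Ideal.radical_mono hJK (h i)

lemma CF_of_finite (hw : ∀ i, 0 < w i) {J : Ideal (MvPolynomial σ ℂ)} (hJ : HI w J)
    (hfin : Module.Finite ℂ (MvPolynomial σ ℂ ⧸ J)) : CF J := by
  intro i
  obtain ⟨P, hP, hP2⟩ := Algebra.IsIntegral.isIntegral (R := ℂ) (Ideal.Quotient.mk J (X i))
  have h1 : Polynomial.aeval (X i : MvPolynomial σ ℂ) P ∈ J := by
    rw [← Ideal.Quotient.eq_zero_iff_mem]
    have : Ideal.Quotient.mk J (Polynomial.aeval (X i : MvPolynomial σ ℂ) P) =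
        Polynomial.aeval (Ideal.Quotient.mk J (X i)) P := by
      exact (Polynomial.aeval_algHom_apply (Ideal.Quotient.mkₐ ℂ J) (X i) P).symm
    rw [this]; exact hP2
  refine ⟨P.natDegree, ?_⟩
  have h2 := hJ _ h1 (P.natDegree * w i)
  have h3 : weightedHomogeneousComponent w (P.natDegree * w i)
      (Polynomial.aeval (X i : MvPolynomial σ ℂ) P) = X i ^ P.natDegree := by
    rw [Polynomial.aeval_eq_sum_range, map_sum, Finset.sum_eq_single P.natDegree]
    · rw [hP.coeff_natDegree, one_smul]
      apply IsWeightedHomogeneous.weightedHomogeneousComponent_same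
      simpa using (isWeightedHomogeneous_X ℂ w i).pow P.natDegree
    · intro b _ hb
      rw [map_smul, IsWeightedHomogeneous.weightedHomogeneousComponent_ne (m := b * w i), smul_zero]
      · simpa using (isWeightedHomogeneous_X ℂ w i).pow b
      · intro h
        exact hb (Nat.eq_of_mul_eq_mul_right (hw i) h).symm
    · simp
  rwa [h3] at h2

lemma regSeq_X (l : List σ) : ∀ (s : Set σ), l.Nodup → (∀ i ∈ l, i ∉ s) →
    RegSeq (Ideal.span ((X : σ → MvPolynomial σ ℂ) '' s)) (l.map X) := by
  induction l with
  | nil => intro s _ _; trivial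
  | cons j l ih =>
    intro s hl hs
    refine ⟨?_, ?_⟩
    · intro a ha
      rw [mem_ideal_span_X_image] at ha ⊢
      intro m hm
      obtain ⟨i, his, hi⟩ := ha (Finsupp.single j 1 + m) (by
        rw [mem_support_iff, coeff_X_mul]; exact mem_support_iff.1 hm)
      refine ⟨i, his, ?_⟩
      have hij : j ≠ i := by rintro rfl; exact hs j (by simp) his
      simpa [Finsupp.single_apply, hij] using hi
    · have : Ideal.span ((X : σ → MvPolynomial σ ℂ) '' s) ⊔ Ideal.span {X j} =
          Ideal.span (X '' (insert j s)) := by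
        rw [← Ideal.span_union, Set.image_insert_eq, Set.union_comm, Set.singleton_union]
      rw [this]
      rw [List.nodup_cons] at hl
      refine ih _ hl.2 ?_
      intro i hi hmem
      rcases hmem with rfl | hmem
      · exact hl.1 hi
      · exact hs i (by simp [hi]) hmem

end Hilb

section Main

variable [Fintype σ]

lemma exists_poly (hw : ∀ i, 0 < w i) {I : Ideal (MvPolynomial σ ℂ)} (hI : HI w I)
    {T U : MvPolynomial σ ℂ} {D : ℕ} (hD : 0 < D) (hT : IsWeightedHomogeneous w T D)
    (hU : IsWeightedHomogeneous w U D) (hcf : CF (I ⊔ Ideal.span {U})) :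
    ∃ F : Polynomial ℂ, F ≠ 0 ∧
      ∀ c, F.eval c ≠ 0 → U ∈ (I ⊔ Ideal.span {T - C c * U}).radical := by
  obtain ⟨B, hB⟩ := hcf.exists_bound hw
  have hbd : ∀ m, Hf w I ((B + m) * D) ≤ Hf w I (B * D) := by
    intro m
    induction m with
    | zero => simp
    | succ m ih =>
      have h1 := Hf_le hw hI hU ((B + m) * D)
      have h2 : Hf w (I ⊔ Ideal.span {U}) ((B + m) * D + D) = 0 := by
        rw [Hf_eq_zero_iff hw]
        apply hB
        nlinarith
      have h3 : (B + (m + 1)) * D = (B + m) * D + D := by ring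
      rw [h3]
      omega
  set n := B + Hf w I (B * D) with hn
  have := Qn_finite hw I (n * D)
  let v : Fin (n + 1) → Qn w I (n * D) := fun i =>
    ⟨Ideal.Quotient.mk I (T ^ (i : ℕ) * U ^ (n - i)), mem_Qn.2 ⟨_, by
      have := (hT.pow (i : ℕ)).mul (hU.pow (n - i))
      convert this using 1
      rw [smul_eq_mul, smul_eq_mul, ← add_mul]
      congr 1
      omega, rfl⟩⟩
  have hdep : ¬ LinearIndependent ℂ v := by
    intro h
    have h1 := h.fintype_card_le_finrank
    rw [Fintype.card_fin] at h1
    have h2 := hbd (Hf w I (B * D))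
    have h3 : Module.finrank ℂ (Qn w I (n * D)) = Hf w I (n * D) := rfl
    rw [← hn] at h2
    omega
  obtain ⟨c, hc, i0, hi0⟩ := Fintype.not_linearIndependent_iff.1 hdep
  refine ⟨∑ i : Fin (n + 1), Polynomial.monomial (i : ℕ) (c i), ?_, ?_⟩
  · intro h
    apply hi0
    have := congrArg (fun p => Polynomial.coeff p (i0 : ℕ)) h
    simpa [Polynomial.finsetSum_coeff, Polynomial.coeff_monomial, Fin.val_inj] using this
  · intro t ht
    refine ⟨n, ?_⟩
    have hmem : ∑ i : Fin (n + 1), C (c i) * (T ^ (i : ℕ) * U ^ (n - i)) ∈ I := by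
      rw [← Ideal.Quotient.eq_zero_iff_mem, map_sum]
      have := congrArg (Subtype.val) hc
      rw [Submodule.coe_sum] at this
      refine Eq.trans (Finset.sum_congr rfl fun i _ => ?_) this
      rw [← smul_eq_C_mul]
      rfl
    set J := I ⊔ Ideal.span {T - C t * U} with hJ
    have hTU : Ideal.Quotient.mk J T = Ideal.Quotient.mk J (C t * U) := by
      rw [Ideal.Quotient.eq]
      exact Submodule.mem_sup_right (Ideal.mem_span_singleton_self _)
    have h0 : Ideal.Quotient.mk J
        (∑ i : Fin (n + 1), C (c i) * (T ^ (i : ℕ) * U ^ (n - i))) = 0 :=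
      Ideal.Quotient.eq_zero_iff_mem.2 (Submodule.mem_sup_left hmem)
    have h1 : Ideal.Quotient.mk J (∑ i : Fin (n + 1), C (c i) * (T ^ (i : ℕ) * U ^ (n - i))) =
        Ideal.Quotient.mk J
          (C (Polynomial.eval t (∑ i : Fin (n + 1), Polynomial.monomial (i : ℕ) (c i))) * U ^ n) := by
      rw [Polynomial.eval_finsetSum, map_sum C, Finset.sum_mul, map_sum, map_sum]
      refine Finset.sum_congr rfl fun i _ => ?_
      rw [map_mul, map_mul, map_pow, hTU, ← map_pow, ← map_mul, ← map_mul]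
      congr 1
      have hi : (i : ℕ) + (n - i) = n := by omega
      rw [Polynomial.eval_monomial]
      have hUn : U ^ n = U ^ (i : ℕ) * U ^ (n - i) := by rw [← pow_add, hi]
      rw [hUn, mul_pow, map_mul, map_pow]
      ring
    rw [h1, Ideal.Quotient.eq_zero_iff_mem] at h0
    have h2 := J.mul_mem_left (C (Polynomial.eval t
      (∑ i : Fin (n + 1), Polynomial.monomial (i : ℕ) (c i)))⁻¹) h0
    rwa [← mul_assoc, ← map_mul, inv_mul_cancel₀ ht, map_one, one_mul] at h2

lemma exists_h (hw : ∀ i, 0 < w i) {I₁ I₂ : Ideal (MvPolynomial σ ℂ)} (h₁ : HI w I₁)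
    (h₂ : HI w I₂) {x g : MvPolynomial σ ℂ} (hx : PH w x) (hg : PH w g)
    (hcf₁ : CF (I₁ ⊔ Ideal.span {x})) (hcf₂ : CF (I₂ ⊔ Ideal.span {g})) :
    ∃ h, PH w h ∧ CF (I₁ ⊔ Ideal.span {h}) ∧ CF (I₂ ⊔ Ideal.span {h}) := by
  obtain ⟨a, ha, hx⟩ := hx
  obtain ⟨b, hb, hg⟩ := hg
  have hU : IsWeightedHomogeneous w (x ^ b) (a * b) := by
    simpa [mul_comm] using hx.pow b
  have hT : IsWeightedHomogeneous w (g ^ a) (a * b) := by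
    simpa using hg.pow a
  have aux : ∀ {I : Ideal (MvPolynomial σ ℂ)} {y : MvPolynomial σ ℂ} (e : ℕ),
      I ⊔ Ideal.span {y} ≤ (I ⊔ Ideal.span {y ^ e}).radical := by
    intro I y e
    refine sup_le (le_sup_left.trans Ideal.le_radical) ?_
    rw [Ideal.span_singleton_le_iff_mem]
    exact ⟨e, Submodule.mem_sup_right (Ideal.mem_span_singleton_self _)⟩
  have hD : 0 < a * b := Nat.mul_pos ha hb
  have c1 := hcf₁.mono (aux b)
  have c2 := hcf₂.mono (aux a)
  obtain ⟨F, hF0, hF⟩ := exists_poly hw h₁ hD hT hU c1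
  obtain ⟨G, hG0, hG⟩ := exists_poly hw h₂ hD hU hT c2
  obtain ⟨c, hc⟩ := Infinite.exists_notMem_finset
    (insert (0 : ℂ) (F.roots.toFinset ∪ G.roots.toFinset.image (fun z => z⁻¹)))
  simp only [Finset.mem_insert, Finset.mem_union, Multiset.mem_toFinset, Finset.mem_image,
    not_or, Polynomial.mem_roots hF0, Polynomial.IsRoot.def] at hc
  obtain ⟨hc0, hcF, hcG⟩ := hc
  have hGc : G.eval c⁻¹ ≠ 0 := by
    intro h
    exact hcG ⟨c⁻¹, by rw [Polynomial.mem_roots hG0]; exact h, inv_inv c⟩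
  have r1 := hF c hcF
  have r2 := hG c⁻¹ hGc
  have hspan : Ideal.span {x ^ b - C c⁻¹ * g ^ a} =
      (Ideal.span {g ^ a - C c * x ^ b} : Ideal (MvPolynomial σ ℂ)) := by
    have hCC : (C c * C c⁻¹ : MvPolynomial σ ℂ) = 1 := by
      rw [← map_mul, mul_inv_cancel₀ hc0, map_one]
    apply le_antisymm <;> rw [Ideal.span_singleton_le_iff_mem, Ideal.mem_span_singleton']
    · exact ⟨- C c⁻¹, by linear_combination (x ^ b) * hCC⟩
    · exact ⟨- C c, by linear_combination (g ^ a) * hCC⟩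
  rw [hspan] at r2
  refine ⟨g ^ a - C c * x ^ b, ⟨_, hD, hT.sub (hU.C_mul c)⟩, c1.mono ?_, c2.mono ?_⟩
  · exact sup_le (le_sup_left.trans Ideal.le_radical)
      ((Ideal.span_singleton_le_iff_mem _).2 r1)
  · exact sup_le (le_sup_left.trans Ideal.le_radical)
      ((Ideal.span_singleton_le_iff_mem _).2 r2)

theorem regSeq_of_cf (hw : ∀ i, 0 < w i) (s : ℕ) : ∀ {I : Ideal (MvPolynomial σ ℂ)}, HI w I →
    ∀ xs gs : List (MvPolynomial σ ℂ), xs.length = s → gs.length = s →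
    (∀ x ∈ xs, PH w x) → (∀ g ∈ gs, PH w g) → RegSeq I xs →
    CF (I ⊔ Ideal.ofList xs) → CF (I ⊔ Ideal.ofList gs) → RegSeq I gs := by
  induction s with
  | zero =>
    intro I hI xs gs _ hgs _ _ _ _ _
    rw [List.length_eq_zero_iff.1 hgs]
    trivial
  | succ s ih =>
    rintro I hI (_ | ⟨x, xs⟩) (_ | ⟨g, gs⟩) hxl hgl hxs hgs hreg hcx hcg
    · trivial
    · simp at hxl
    · trivial
    simp only [List.length_cons, Nat.add_right_cancel_iff] at hxl hgl
    have hxs' : ∀ y ∈ xs, PH w y := fun y hy => hxs y (by simp [hy])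
    have hgs' : ∀ y ∈ gs, PH w y := fun y hy => hgs y (by simp [hy])
    have e : ∀ (y : MvPolynomial σ ℂ) (l : List (MvPolynomial σ ℂ)),
        I ⊔ Ideal.ofList (y :: l) = I ⊔ Ideal.ofList l ⊔ Ideal.span {y} := by
      intro y l
      rw [Ideal.ofList_cons, sup_assoc, sup_comm (Ideal.span {y})]
    rw [e] at hcx hcg
    obtain ⟨h, hh, hc1, hc2⟩ := exists_h hw (hI.ofList hxs') (hI.ofList hgs')
      (hxs x (by simp)) (hgs g (by simp)) hcx hcg
    obtain ⟨dh, hdh, hhom⟩ := hh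
    have hh : PH w h := ⟨dh, hdh, hhom⟩
    -- `xs, x` is regular
    have r1 := hreg.perm (w := w) (List.perm_append_singleton x xs).symm hI hxs
    rw [regSeq_append] at r1
    have r2 : Reg (I ⊔ Ideal.ofList xs) h := reg_of_pow r1.2 (hc1.mem_radical hw (hxs x (by simp)))
    have r3 : RegSeq I (h :: xs) := by
      refine RegSeq.perm (w := w) (List.perm_append_singleton h xs) hI ?_
        ((regSeq_append _ _ _).2 ⟨r1.1, r2⟩)
      intro y hy
      rcases List.mem_append.1 hy with hy | hy
      · exact hxs' y hy
      · rw [List.mem_singleton.1 hy]; exact hh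
    have r4 : RegSeq (I ⊔ Ideal.span {h}) gs := by
      refine ih (hI.sup hhom) xs gs hxl hgl hxs' hgs' r3.2 ?_ ?_
      · rwa [sup_right_comm]
      · rwa [sup_right_comm]
    have r5 : RegSeq I (gs ++ [h]) := by
      refine RegSeq.perm (w := w) (List.perm_append_singleton h gs).symm hI ?_ ⟨r3.1, r4⟩
      intro y hy
      rcases List.mem_cons.1 hy with hy | hy
      · rw [hy]; exact hh
      · exact hgs' y hy
    rw [regSeq_append] at r5
    have r6 : Reg (I ⊔ Ideal.ofList gs) g := reg_of_pow r5.2 (hcg.mem_radical hw hh)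
    refine RegSeq.perm (w := w) (List.perm_append_singleton g gs) hI ?_
        ((regSeq_append _ _ _).2 ⟨r5.1, r6⟩)
    intro y hy
    rcases List.mem_append.1 hy with hy | hy
    · exact hgs' y hy
    · rw [List.mem_singleton.1 hy]; exact hgs g (by simp)

lemma ofList_toList {ι R : Type*} [Fintype ι] [CommRing R] (g : ι → R) :
    Ideal.ofList ((Finset.univ.toList : List ι).map g) = Ideal.span (Set.range g) := by
  change Ideal.span {r | r ∈ _} = _
  congr 1
  ext y
  simp

lemma coe_prod_aux {κ : Type*} [Fintype κ] (e : κ → ℕ) :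
    ((∏ i, (1 - Polynomial.X ^ e i) : Polynomial ℤ) : PowerSeries ℤ) =
      ∏ i, (1 - PowerSeries.X ^ e i) := by
  rw [← Polynomial.coeToPowerSeries.ringHom_apply, map_prod]
  simp

lemma HS_vars (hw : ∀ i, 0 < w i) :
    HS w (Ideal.span (Set.range (X : σ → MvPolynomial σ ℂ))) = 1 := by
  have hmem : ∀ a : MvPolynomial σ ℂ, a ∈ Ideal.span (Set.range (X : σ → MvPolynomial σ ℂ)) ↔
      coeff 0 a = 0 := by
    intro a
    rw [← Set.image_univ, mem_ideal_span_X_image]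
    constructor
    · intro h
      by_contra h0
      obtain ⟨i, _, hi⟩ := h 0 (mem_support_iff.2 h0)
      simp at hi
    · intro h m hm
      by_contra! hcon
      have : m = 0 := by ext i; exact hcon i (Set.mem_univ i)
      rw [this] at hm
      exact mem_support_iff.1 hm h
  ext n
  rw [HS, PowerSeries.coeff_mk, PowerSeries.coeff_one]
  split_ifs with hn
  · subst hn
    have : Qn w (Ideal.span (Set.range (X : σ → MvPolynomial σ ℂ))) 0 =
        Submodule.span ℂ {1} := by
      apply le_antisymm
      · rintro _ ⟨a, ha, rfl⟩
        have h1 := ha.weightedHomogeneousComponent_same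
        rw [weightedHomogeneousComponent_zero _ (fun i => (hw i).ne')] at h1
        rw [Submodule.mem_span_singleton]
        refine ⟨coeff 0 a, ?_⟩
        conv_rhs => rw [← h1]
        rw [← mul_one (C _), ← smul_eq_C_mul, map_smul]
        rfl
      · rw [Submodule.span_singleton_le_iff_mem]
        exact mem_Qn.2 ⟨1, isWeightedHomogeneous_one ℂ w, rfl⟩
    rw [Hf, this, finrank_span_singleton]
    · rfl
    · intro h
      have : (1 : MvPolynomial σ ℂ) ∈ Ideal.span (Set.range (X : σ → MvPolynomial σ ℂ)) :=
        Ideal.Quotient.eq_zero_iff_mem.1 h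
      rw [hmem] at this
      simp at this
  · have : Hf w (Ideal.span (Set.range (X : σ → MvPolynomial σ ℂ))) n = 0 := by
      rw [Hf_eq_zero_iff hw]
      intro a ha
      rw [hmem]
      apply ha.coeff_eq_zero
      simpa using Ne.symm hn
    rw [this]; rfl

lemma finrank_eq_sum {J : Ideal (MvPolynomial σ ℂ)} (hw : ∀ i, 0 < w i) (hJ : HI w J) (B : ℕ)
    (hB : ∀ n, B ≤ n → ∀ a, IsWeightedHomogeneous w a n → a ∈ J) :
    Module.finrank ℂ (MvPolynomial σ ℂ ⧸ J) = ∑ n : Fin B, Hf w J n := by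
  let Φ : MvPolynomial σ ℂ →ₗ[ℂ] ((n : Fin B) → Qn w J n) := LinearMap.pi fun n =>
    LinearMap.codRestrict _
      ((Ideal.Quotient.mkₐ ℂ J).toLinearMap ∘ₗ weightedHomogeneousComponent w (n : ℕ))
      (fun a => mem_Qn.2 ⟨_, weightedHomogeneousComponent_isWeightedHomogeneous _ _, rfl⟩)
  have hΦ : ∀ a n, (Φ a n : MvPolynomial σ ℂ ⧸ J) =
      Ideal.Quotient.mk J (weightedHomogeneousComponent w (n : ℕ) a) := fun a n => rfl
  have hker : LinearMap.ker Φ = J.restrictScalars ℂ := by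
    ext a
    rw [LinearMap.mem_ker, Submodule.restrictScalars_mem]
    constructor
    · intro h
      refine HI.mem (w := w) fun n => ?_
      rcases lt_or_ge n B with hn | hn
      · rw [← Ideal.Quotient.eq_zero_iff_mem, ← hΦ a ⟨n, hn⟩, h]
        rfl
      · exact hB n hn _ (weightedHomogeneousComponent_isWeightedHomogeneous _ _)
    · intro h
      ext n
      rw [hΦ]
      exact Ideal.Quotient.eq_zero_iff_mem.2 (hJ a h n)
  have hsurj : Function.Surjective Φ := by
    intro y
    have : ∀ n : Fin B, ∃ a, IsWeightedHomogeneous w a n ∧ Ideal.Quotient.mk J a = y n :=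
      fun n => mem_Qn.1 (y n).2
    choose a ha hay using this
    refine ⟨∑ n, a n, ?_⟩
    ext n
    rw [hΦ, map_sum, Finset.sum_eq_single n]
    · rw [(ha n).weightedHomogeneousComponent_same, hay]
    · intro b _ hb
      refine IsWeightedHomogeneous.weightedHomogeneousComponent_ne _ (ha b) ?_
      intro h
      exact hb (Fin.ext h.symm)
    · simp
  have e1 := (LinearMap.quotKerEquivOfSurjective Φ hsurj).finrank_eq
  rw [hker] at e1
  have := fun n => Qn_finite hw J n
  rw [Module.finrank_pi_fintype] at e1
  exact e1

theorem bezout {ι : Type*} [Fintype ι] (hw : ∀ i, 0 < w i) (hcard : Fintype.card ι = Fintype.card σ)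
    (g : ι → MvPolynomial σ ℂ) (d : ι → ℕ) (hd : ∀ j, 0 < d j)
    (hg : ∀ j, IsWeightedHomogeneous w (g j) (d j))
    (hfin : Module.Finite ℂ (MvPolynomial σ ℂ ⧸ Ideal.span (Set.range g))) :
    (∏ i, w i) * Module.finrank ℂ (MvPolynomial σ ℂ ⧸ Ideal.span (Set.range g)) = ∏ j, d j := by
  set J := Ideal.span (Set.range g) with hJdef
  let Lx : List (MvPolynomial σ ℂ × ℕ) := (Finset.univ.toList : List σ).map fun i => (X i, w i)
  let Lg : List (MvPolynomial σ ℂ × ℕ) := (Finset.univ.toList : List ι).map fun j => (g j, d j)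
  have ex : Lx.map Prod.fst = (Finset.univ.toList : List σ).map X := by
    simp [Lx, Function.comp_def]
  have eg : Lg.map Prod.fst = (Finset.univ.toList : List ι).map g := by
    simp [Lg, Function.comp_def]
  have jx : ⊥ ⊔ Ideal.ofList (Lx.map Prod.fst) =
      Ideal.span (Set.range (X : σ → MvPolynomial σ ℂ)) := by
    rw [ex, ofList_toList, bot_sup_eq]
  have jg : ⊥ ⊔ Ideal.ofList (Lg.map Prod.fst) = J := by
    rw [eg, ofList_toList, bot_sup_eq]
  have px : ∀ x ∈ Lx.map Prod.fst, PH w x := by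
    rw [ex]
    intro x hx
    obtain ⟨i, _, rfl⟩ := List.mem_map.1 hx
    exact ⟨w i, hw i, isWeightedHomogeneous_X ℂ w i⟩
  have pg : ∀ x ∈ Lg.map Prod.fst, PH w x := by
    rw [eg]
    intro x hx
    obtain ⟨i, _, rfl⟩ := List.mem_map.1 hx
    exact ⟨d i, hd i, hg i⟩
  have hJ : HI w J := by rw [← jg]; exact HI_bot.ofList pg
  have cJ : CF J := CF_of_finite hw hJ hfin
  have rx : RegSeq ⊥ (Lx.map Prod.fst) := by
    rw [ex]
    have := regSeq_X (Finset.univ.toList : List σ) ∅ (Finset.nodup_toList _) (by simp)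
    simpa using this
  have rg : RegSeq ⊥ (Lg.map Prod.fst) := by
    refine regSeq_of_cf hw (Fintype.card σ) HI_bot _ _ ?_ ?_ px pg rx ?_ ?_
    · simp [Lx]
    · simp [Lg, hcard]
    · rw [jx]
      intro i
      exact Ideal.le_radical (Ideal.subset_span ⟨i, rfl⟩)
    · rwa [jg]
  have hx := HS_list hw Lx HI_bot (by
    intro p hp
    obtain ⟨i, _, rfl⟩ := List.mem_map.1 hp
    exact isWeightedHomogeneous_X ℂ w i) rx
  have hgs := HS_list hw Lg HI_bot (by
    intro p hp
    obtain ⟨i, _, rfl⟩ := List.mem_map.1 hp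
    exact hg i) rg
  rw [jx, HS_vars hw] at hx
  rw [jg] at hgs
  have hLx : (Lx.map fun p => (1 - PowerSeries.X ^ p.2 : PowerSeries ℤ)).prod =
      ∏ i, (1 - PowerSeries.X ^ w i) := by
    simp [Lx, Function.comp_def]
  have hLg : (Lg.map fun p => (1 - PowerSeries.X ^ p.2 : PowerSeries ℤ)).prod =
      ∏ i, (1 - PowerSeries.X ^ d i) := by
    simp [Lg, Function.comp_def]
  rw [hLx] at hx
  rw [hLg] at hgs
  obtain ⟨B, hB⟩ := cJ.exists_bound hw
  let P : Polynomial ℤ := ∑ n : Fin B, Polynomial.monomial (n : ℕ) (Hf w J n : ℤ)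
  have hP : (P : PowerSeries ℤ) = HS w J := by
    ext n
    rw [Polynomial.coeff_coe, HS, PowerSeries.coeff_mk]
    simp only [P, Polynomial.finsetSum_coeff, Polynomial.coeff_monomial]
    rcases lt_or_ge n B with hn | hn
    · rw [Finset.sum_eq_single ⟨n, hn⟩]
      · simp
      · intro b _ hb
        rw [if_neg]
        intro h
        exact hb (Fin.ext h)
      · simp
    · rw [(Hf_eq_zero_iff hw J n).2 (hB n hn), Finset.sum_eq_zero]
      · rfl
      · intro b _
        rw [if_neg]
        omega
  have hP1 : P.eval 1 = (Module.finrank ℂ (MvPolynomial σ ℂ ⧸ J) : ℤ) := by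
    rw [finrank_eq_sum hw hJ B hB]
    simp [P, Polynomial.eval_finsetSum]
  have key : (∏ i, (1 - PowerSeries.X ^ w i)) * (P : PowerSeries ℤ) =
      ∏ j, (1 - PowerSeries.X ^ d j) := by
    rw [hP, hgs]
    linear_combination (-∏ j, (1 - PowerSeries.X ^ d j : PowerSeries ℤ)) * hx
  have key2 : (∏ i, (1 - Polynomial.X ^ w i)) * P =
      (∏ j, (1 - Polynomial.X ^ d j) : Polynomial ℤ) := by
    apply Polynomial.coe_injective
    rw [Polynomial.coe_mul, coe_prod_aux, coe_prod_aux, key]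
  have fac : ∀ e : ℕ, (1 - Polynomial.X ^ e : Polynomial ℤ) =
      (1 - Polynomial.X) * ∑ i ∈ Finset.range e, Polynomial.X ^ i :=
    fun e => (mul_neg_geom_sum _ _).symm
  simp only [fac, Finset.prod_mul_distrib, Finset.prod_const, Finset.card_univ, hcard,
    mul_assoc] at key2
  have hne : (1 - Polynomial.X : Polynomial ℤ) ^ Fintype.card σ ≠ 0 := by
    apply pow_ne_zero
    intro h
    have := congrArg (Polynomial.eval 0) h
    simp at this
  have key3 := congrArg (Polynomial.eval 1) (mul_left_cancel₀ hne key2)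
  simp only [Polynomial.eval_mul, Polynomial.eval_prod, Polynomial.eval_finsetSum,
    Polynomial.eval_pow, Polynomial.eval_X, one_pow, Finset.sum_const, Finset.card_range,
    nsmul_eq_mul, mul_one, hP1] at key3
  exact_mod_cast key3

end Main

section Final

lemma wh_rename {σ τ : Type*} {v : τ → ℕ} (φ : σ → τ) {p : MvPolynomial σ ℂ} {m : ℕ}
    (h : IsWeightedHomogeneous (fun i => v (φ i)) p m) :
    IsWeightedHomogeneous v (rename φ p) m := by
  intro e he
  obtain ⟨u, rfl, hu⟩ := coeff_rename_ne_zero φ p e he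
  rw [← h hu, Finsupp.weight_apply, Finsupp.weight_apply, Finsupp.sum_mapDomain_index]
  · simp
  · intros; simp [add_mul]

lemma wh_of_mul {σ : Type*} {v : σ → ℕ} {p q : MvPolynomial σ ℂ} {e1 e2 : ℕ}
    (hpq : IsWeightedHomogeneous v (p * q) e1) (hq : IsWeightedHomogeneous v q e2)
    (hq0 : q ≠ 0) (hp0 : p ≠ 0) : ∃ m, m + e2 = e1 ∧ IsWeightedHomogeneous v p m := by
  have hz : ∀ m, m + e2 ≠ e1 → weightedHomogeneousComponent v m p = 0 := by
    intro m hm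
    have h := whc_mul v hq p m
    rw [mul_comm q p, hpq.weightedHomogeneousComponent_ne _ hm] at h
    exact (mul_eq_zero.1 h.symm).resolve_left hq0
  obtain ⟨B, hB⟩ := decomp v p
  have hpB := hB B le_rfl
  obtain ⟨m, hm⟩ : ∃ m, weightedHomogeneousComponent v m p ≠ 0 := by
    by_contra! hcon
    apply hp0
    rw [hpB]
    exact Finset.sum_eq_zero fun n _ => hcon n
  have hme : m + e2 = e1 := by
    by_contra h
    exact hm (hz m h)
  refine ⟨m, hme, ?_⟩
  rw [hpB]
  refine IsWeightedHomogeneous.sum _ _ _ fun n _ => ?_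
  by_cases hn : n = m
  · subst hn; exact weightedHomogeneousComponent_isWeightedHomogeneous _ _
  · rw [hz n (by omega)]; exact isWeightedHomogeneous_zero ℂ v m

lemma Vdm_ne_zero (n k : ℕ) : Vdm n k ≠ 0 := by
  rw [Vdm, Finset.prod_ne_zero_iff]
  intro p hp
  rw [Finset.mem_filter] at hp
  rw [sub_ne_zero]
  intro h
  have := X_injective h
  simp at this
  exact absurd this hp.2.ne'

lemma Vdm_wh (n k : ℕ) (w : Fin (n - 1) → ℕ) (wn : ℕ) :
    IsWeightedHomogeneous (Sum.elim w fun _ => wn) (Vdm n k) (∑ b : Fin k, (b : ℕ) * wn) := by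
  have h : ∀ p ∈ Finset.univ.filter (fun p : Fin k × Fin k => p.1 < p.2),
      IsWeightedHomogeneous (Sum.elim w fun _ => wn)
        (X (Sum.inr p.2) - X (Sum.inr p.1) : MvPolynomial (Fin (n - 1) ⊕ Fin k) ℂ) wn :=
    fun p _ => (isWeightedHomogeneous_X ℂ (Sum.elim w fun _ => wn) (Sum.inr p.2)).sub
      (isWeightedHomogeneous_X ℂ (Sum.elim w fun _ => wn) (Sum.inr p.1))
  have h2 := IsWeightedHomogeneous.prod _ _ (fun _ => wn) h
  suffices hsum : ∑ b : Fin k, (b : ℕ) * wn =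
      ∑ _p ∈ Finset.univ.filter (fun p : Fin k × Fin k => p.1 < p.2), wn by
    rw [hsum]; exact h2
  rw [Finset.sum_filter, ← Finset.univ_product_univ, Finset.sum_product_right]
  refine Finset.sum_congr rfl fun b _ => ?_
  rw [← Finset.sum_filter, Finset.sum_const, smul_eq_mul]
  congr 1
  have : (Finset.univ.filter fun a : Fin k => a < b) = Finset.Iio b := by ext; simp
  rw [this, Fin.card_Iio]

lemma det_wh {n k : ℕ} (w : Fin (n - 1) → ℕ) (wn : ℕ) {g : MvPolynomial (Fin (n - 1) ⊕ Unit) ℂ}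
    {d : ℕ} (hg : IsWeightedHomogeneous (Sum.elim w fun _ => wn) g d) (i : Fin k) :
    IsWeightedHomogeneous (Sum.elim w fun _ => wn) (Mmat g i).det
      (∑ b : Fin k, if b = i then d else (b : ℕ) * wn) := by
  rw [Matrix.det_apply']
  refine IsWeightedHomogeneous.sum _ _ _ fun s _ => ?_
  have h : IsWeightedHomogeneous (Sum.elim w fun _ => wn) (∏ b, Mmat g i (s b) b)
      (∑ b : Fin k, if b = i then d else (b : ℕ) * wn) := by
    refine IsWeightedHomogeneous.prod _ _ _ fun b _ => ?_
    unfold Mmat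
    split_ifs with hb
    · apply wh_rename
      convert hg using 1
      funext x
      rcases x with x | x <;> rfl
    · simpa using (isWeightedHomogeneous_X ℂ (Sum.elim w fun _ => wn) (Sum.inr (s b))).pow (b : ℕ)
  have := h.C_mul ((Equiv.Perm.sign s : ℤ) : ℂ)
  simpa using this

lemma V_wh {n k : ℕ} (w : Fin (n - 1) → ℕ) (wn : ℕ) {g : MvPolynomial (Fin (n - 1) ⊕ Unit) ℂ}
    {d : ℕ} (hg : IsWeightedHomogeneous (Sum.elim w fun _ => wn) g d) (i : Fin k)
    {v : MvPolynomial (Fin (n - 1) ⊕ Fin k) ℂ} (hv : (Mmat g i).det = v * Vdm n k) (hv0 : v ≠ 0) :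
    ∃ m : ℕ, (m : ℤ) = d - (i : ℕ) * wn ∧
      IsWeightedHomogeneous (Sum.elim w fun _ => wn) v m := by
  have h := det_wh w wn hg i
  rw [hv] at h
  obtain ⟨m, hm, hm2⟩ := wh_of_mul h (Vdm_wh n k w wn) (Vdm_ne_zero n k) hv0
  refine ⟨m, ?_, hm2⟩
  rw [← Finset.add_sum_erase _ _ (Finset.mem_univ i),
    ← Finset.add_sum_erase _ _ (Finset.mem_univ i), if_pos rfl] at hm
  have e : ∑ b ∈ Finset.univ.erase i, (if b = i then d else (b : ℕ) * wn) =
      ∑ b ∈ Finset.univ.erase i, (b : ℕ) * wn :=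
    Finset.sum_congr rfl fun b hb => if_neg (Finset.ne_of_mem_erase hb)
  rw [e] at hm
  have : m + (i : ℕ) * wn = d := by omega
  have := congrArg (fun t : ℕ => (t : ℤ)) this
  push_cast at this
  linarith

/-- The weighted Bezout formula allowing zero and constant generators. -/
theorem bezout' {σ ι : Type*} [Fintype σ] [Fintype ι] {w : σ → ℕ} (hw : ∀ i, 0 < w i)
    (hcard : Fintype.card ι = Fintype.card σ)
    (g : ι → MvPolynomial σ ℂ) (d : ι → ℤ)
    (hg : ∀ j, g j ≠ 0 → ∃ m : ℕ, (m : ℤ) = d j ∧ IsWeightedHomogeneous w (g j) m)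
    (hfin : Module.Finite ℂ (MvPolynomial σ ℂ ⧸ Ideal.span (Set.range g))) :
    ((∏ i, w i : ℕ) : ℤ) *
      (Module.finrank ℂ (MvPolynomial σ ℂ ⧸ Ideal.span (Set.range g)) : ℤ) = ∏ j, d j := by
  classical
  by_cases hA : ∃ j, g j ≠ 0 ∧ d j = 0
  · obtain ⟨j, hj, hd⟩ := hA
    obtain ⟨m, hm, hmh⟩ := hg j hj
    rw [hd] at hm
    have hm0 : m = 0 := by exact_mod_cast hm
    subst hm0
    have h1 := hmh.weightedHomogeneousComponent_same
    rw [weightedHomogeneousComponent_zero _ (fun i => (hw i).ne')] at h1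
    have hc : coeff 0 (g j) ≠ 0 := by
      intro h
      rw [h, map_zero] at h1
      exact hj h1.symm
    have htop : Ideal.span (Set.range g) = ⊤ := by
      refine Ideal.eq_top_of_isUnit_mem _ (Ideal.subset_span (Set.mem_range_self j)) ?_
      rw [← h1]
      exact (isUnit_iff_ne_zero.2 hc).map C
    rw [htop, Finset.prod_eq_zero (Finset.mem_univ j) hd]
    have : Subsingleton (MvPolynomial σ ℂ ⧸ (⊤ : Ideal (MvPolynomial σ ℂ))) :=
      Ideal.Quotient.subsingleton_iff.2 rfl
    rw [Module.finrank_zero_of_subsingleton]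
    simp
  · push Not at hA
    have hdeg : ∀ t : ℕ, 0 < t → ∀ j, ∃ m : ℕ, 0 < m ∧ IsWeightedHomogeneous w (g j) m ∧
        (g j ≠ 0 → (m : ℤ) = d j) ∧ (g j = 0 → m = t) := by
      intro t ht j
      by_cases hj : g j = 0
      · exact ⟨t, ht, by rw [hj]; exact isWeightedHomogeneous_zero ℂ w t, fun h => absurd hj h,
          fun _ => rfl⟩
      · obtain ⟨m, hm, hmh⟩ := hg j hj
        refine ⟨m, ?_, hmh, fun _ => hm, fun h => absurd h hj⟩
        have := hA j hj
        rw [← hm] at this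
        exact Nat.pos_of_ne_zero (by exact_mod_cast this)
    choose e1 p1 h1 a1 b1 using hdeg 1 one_pos
    choose e2 p2 h2 a2 b2 using hdeg 2 two_pos
    have B1 := bezout hw hcard g e1 p1 h1 hfin
    have B2 := bezout hw hcard g e2 p2 h2 hfin
    have hne : ∀ j, g j ≠ 0 := by
      intro j hj
      have : ∏ j, e1 j < ∏ j, e2 j := by
        refine Finset.prod_lt_prod (fun i _ => p1 i) (fun i _ => ?_)
          ⟨j, Finset.mem_univ j, by rw [b1 j hj, b2 j hj]; norm_num⟩
        by_cases hi : g i = 0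
        · rw [b1 i hi, b2 i hi]; norm_num
        · have := (a1 i hi).trans (a2 i hi).symm
          exact_mod_cast this.le
      omega
    have hd : ∏ j, d j = ∏ j, (e1 j : ℤ) :=
      Finset.prod_congr rfl fun j _ => (a1 j (hne j)).symm
    rw [hd]
    exact_mod_cast B1

end Final

end WBez

/-- the weighted Bezout formula
`w₁⋯w_{n−1}·wₙ^ℓ · dim_ℂ ℂ[x,z₁,…,z_ℓ]/I(f,P) = ∏_{j=1}^{q} ∏_{i=1}^{k−1} (d_j − i·wₙ)`
for the ideal `I(f,P)` generated by the images `π_P(Vᵢᵏ(f_j))` (`1 ≤ i ≤ k−1`,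
`1 ≤ j ≤ q`) under the block-collapse homomorphism `π_P = rename (Sum.map id β)`,
where the blocks of the partition `P = (r₁,…,r_ℓ)` of `k` are encoded as the fibers of
the monotone map `β : Fin k → Fin ℓ` with fiber sizes `r`. -/
theorem stmt0 (n p : ℕ) (hn : 0 < n) (hnp : n < p)
    (q : ℕ) (hq : q = p - n + 1)
    (f : Fin q → MvPolynomial (Fin (n - 1) ⊕ Unit) ℂ)
    (d : Fin q → ℕ) (w : Fin (n - 1) → ℕ) (wn : ℕ)
    (hw : ∀ m, 0 < w m) (hwn : 0 < wn)
    (hf : ∀ j, (f j).IsWeightedHomogeneous (Sum.elim w fun _ => wn) (d j))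
    (k ℓ : ℕ) (r : Fin ℓ → ℕ)
    (hr1 : ∀ m, 1 ≤ r m) (hrmono : Antitone r) (hrsum : ∑ m, r m = k)
    (hkl : (p : ℤ) - (k : ℤ) * ((p : ℤ) - (n : ℤ) + 1) + (ℓ : ℤ) = 0)
    (β : Fin k → Fin ℓ) (hβmono : Monotone β)
    (hβcard : ∀ m, (Finset.univ.filter fun a => β a = m).card = r m)
    (V : Fin q → Fin k → MvPolynomial (Fin (n - 1) ⊕ Fin k) ℂ)
    (hV : ∀ j i, (Mmat (f j) i).det = V j i * Vdm n k)
    (I : Ideal (MvPolynomial (Fin (n - 1) ⊕ Fin ℓ) ℂ))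
    (hI : I = Ideal.span
      {P | ∃ (j : Fin q) (i : Fin k), (i : ℕ) ≠ 0 ∧
        P = rename (Sum.map (id : Fin (n - 1) → Fin (n - 1)) β) (V j i)})
    (hfin : FiniteDimensional ℂ (MvPolynomial (Fin (n - 1) ⊕ Fin ℓ) ℂ ⧸ I)) :
    ((∏ m, w m : ℕ) : ℤ) * (wn : ℤ) ^ ℓ *
        (Module.finrank ℂ (MvPolynomial (Fin (n - 1) ⊕ Fin ℓ) ℂ ⧸ I) : ℤ) =
      ∏ j, ∏ i ∈ Finset.Icc 1 (k - 1), ((d j : ℤ) - (i : ℤ) * (wn : ℤ)) := by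

  obtain ⟨k, rfl⟩ : ∃ k', k = k' + 1 := by
    cases k with
    | zero => simp at hkl; omega
    | succ k => exact ⟨k, rfl⟩
  let g : Fin q × Fin k → MvPolynomial (Fin (n - 1) ⊕ Fin ℓ) ℂ := fun x =>
    rename (Sum.map (id : Fin (n - 1) → Fin (n - 1)) β) (V x.1 x.2.succ)
  have hIg : I = Ideal.span (Set.range g) := by
    rw [hI]
    congr 1
    ext P
    constructor
    · rintro ⟨j, i, hi, rfl⟩
      obtain ⟨i', rfl⟩ := Fin.exists_succ_eq.2 (fun h : i = 0 => hi (by rw [h]; rfl))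
      exact ⟨(j, i'), rfl⟩
    · rintro ⟨⟨j, i⟩, rfl⟩
      exact ⟨j, i.succ, by simp, rfl⟩
  subst hIg
  have hcard : Fintype.card (Fin q × Fin k) = Fintype.card (Fin (n - 1) ⊕ Fin ℓ) := by
    simp only [Fintype.card_prod, Fintype.card_sum, Fintype.card_fin]
    have hqz : (q : ℤ) = p - n + 1 := by omega
    have : ((q * k : ℕ) : ℤ) = ((n - 1 + ℓ : ℕ) : ℤ) := by
      rw [← hqz] at hkl
      push_cast at hkl ⊢
      rw [Nat.cast_sub (by omega : 1 ≤ n)]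
      push_cast
      linarith
    exact_mod_cast this
  have hW : ∀ x : Fin (n - 1) ⊕ Fin ℓ, 0 < (Sum.elim w fun _ => wn : _ → ℕ) x := by
    rintro (x | x)
    · exact hw x
    · exact hwn
  have key := WBez.bezout' hW hcard g (fun x => (d x.1 : ℤ) - ((x.2 : ℕ) + 1 : ℤ) * wn) (by
    rintro ⟨j, i⟩ hne
    have hv0 : V j i.succ ≠ 0 := by
      intro h
      apply hne
      simp only [g]
      rw [h, map_zero]
    obtain ⟨m, hm, hmh⟩ := WBez.V_wh w wn (hf j) i.succ (hV j i.succ) hv0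
    refine ⟨m, by simpa using hm, ?_⟩
    apply WBez.wh_rename
    convert hmh using 1
    funext x
    rcases x with x | x <;> rfl) hfin
  rw [Fintype.prod_sum_type] at key
  simp only [Sum.elim_inl, Sum.elim_inr, Finset.prod_const, Finset.card_univ,
    Fintype.card_fin] at key
  push_cast at key ⊢
  rw [key, Fintype.prod_prod_type]
  refine Finset.prod_congr rfl fun j _ => ?_
  have hIcc : Finset.Icc 1 k = Finset.Ico 1 (k + 1) := by
    ext x; simp [Nat.lt_succ_iff]
  rw [hIcc, Finset.prod_Ico_eq_prod_range, Finset.prod_range]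
  refine Finset.prod_congr rfl fun i _ => ?_
  push_cast
  ring
end

section
/- Let n < p be positive integers and set q = p − n + 1. Let f_1, …, f_q ∈ ℂ[x_1,…,x_{n−1},z] be polynomials such that each f_j is weighted homogeneous of degree d_j with respect to positive integer weights (w_1,…,w_{n−1},w_n). Let P = (r_1,…,r_ℓ) be a partition of k satisfying p − k(p−n+1) + ℓ = 0, and let J_Δ(f,P) ⊆ ℂ[x_1,…,x_{n−1},z_1,…,z_k] be the ideal generated by the polynomials V_i^k(f_j) for 1 ≤ i ≤ k−1, 1 ≤ j ≤ q, together with the differences z_a − z_{a+1} for every index a such that a and a+1 lie in the same block of P. If the quotient ring ℂ[x_1,…,x_{n−1},z_1,…,z_k]/J_Δ(f,P) is finite-dimensional as a ℂ-vector space, then w_1⋯w_{n−1}·w_n^ℓ · dim_ℂ (ℂ[x_1,…,x_{n−1},z_1,…,z_k]/J_Δ(f,P)) = ∏_{j=1}^{q} ∏_{i=1}^{k−1} (d_j − i·w_n). -/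
open MvPolynomial

section LocalAlgebra
open RingTheory.Sequence IsLocalRing Pointwise CategoryTheory Abelian Limits

theorem ass_step {A M : Type} [CommRing A] [IsNoetherianRing A] [IsLocalRing A] [AddCommGroup M]
    [Module A M] [Module.Finite A M] {a : A} (ha : a ∈ maximalIdeal A) (hreg : IsSMulRegular M a)
    {p : Ideal A} (hp : IsAssociatedPrime p M) :
    ∃ q : Ideal A, IsAssociatedPrime q (QuotSMulTop a M) ∧ p ≤ q ∧ a ∈ q := by
  obtain ⟨hpp, x, hx⟩ := isAssociatedPrime_iff.mp hp
  have hmem : ∀ s, s ∈ p ↔ s • x = 0 := by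
    intro s; rw [hx]; simp [Submodule.mem_colon_singleton]
  have hx0 : x ≠ 0 := by
    rintro rfl
    exact hpp.ne_top ((Ideal.eq_top_iff_one _).mpr ((hmem 1).mpr (by simp)))
  let K : Submodule A M := Submodule.torsionBySet A M (p : Set A)
  have hK : ∀ y, y ∈ K ↔ ∀ s ∈ p, s • y = 0 := by
    intro y; simp [K, Submodule.mem_torsionBySet_iff]
  have hxK : x ∈ K := (hK x).mpr fun s hs => (hmem s).mp hs
  have : Nontrivial K := ⟨⟨⟨x, hxK⟩, 0, fun h => hx0 (by simpa using congrArg Subtype.val h)⟩⟩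
  have hne : (⊤ : Submodule A K) ≠ a • ⊤ :=
    Submodule.top_ne_pointwise_smul_of_mem_jacobson_annihilator
      (maximalIdeal_le_jacobson _ ha)
  obtain ⟨y, hy⟩ : ∃ y : K, y ∉ (a • ⊤ : Submodule A K) := by
    by_contra! h
    exact hne (Eq.symm (eq_top_iff.mpr fun y _ => h y))
  have hy0 : (Submodule.Quotient.mk (y : M) : QuotSMulTop a M) ≠ 0 := by
    intro h
    rw [Submodule.Quotient.mk_eq_zero, Submodule.mem_smul_pointwise_iff_exists] at h
    obtain ⟨b, -, hb⟩ := h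
    apply hy
    rw [Submodule.mem_smul_pointwise_iff_exists]
    refine ⟨⟨b, (hK b).mpr fun s hs => ?_⟩, trivial, Subtype.ext hb⟩
    apply hreg
    simp only [smul_zero]
    rw [smul_comm, hb]
    exact (hK y).mp y.2 s hs
  obtain ⟨q, hq, hle⟩ := exists_le_isAssociatedPrime_of_isNoetherianRing A _ hy0
  refine ⟨q, hq, fun s hs => hle ?_, hle ?_⟩
  · rw [Submodule.mem_colon_singleton, Submodule.mem_bot, ← Submodule.Quotient.mk_smul,
      (hK y).mp y.2 s hs, Submodule.Quotient.mk_zero]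
  · rw [Submodule.mem_colon_singleton, Submodule.mem_bot, ← Submodule.Quotient.mk_smul,
      Submodule.Quotient.mk_eq_zero, Submodule.mem_smul_pointwise_iff_exists]
    exact ⟨y, trivial, rfl⟩

theorem dim_step {A : Type} [CommRing A] {p q : Ideal A} [p.IsPrime] [q.IsPrime] (hpq : p ≤ q)
    {a : A} (hap : a ∉ p) (haq : a ∈ q) :
    ringKrullDim (A ⧸ q) + 1 ≤ ringKrullDim (A ⧸ p) := by
  have hnz : Ideal.Quotient.mk p a ∈ nonZeroDivisors (A ⧸ p) := by
    rw [mem_nonZeroDivisors_iff_ne_zero]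
    intro h
    exact hap (Ideal.Quotient.eq_zero_iff_mem.mp h)
  refine le_trans ?_ (ringKrullDim_quotient_succ_le_of_nonZeroDivisor hnz)
  gcongr
  let f : (A ⧸ p) →+* A ⧸ q := Ideal.Quotient.factor hpq
  have hf : ∀ x ∈ Ideal.span {Ideal.Quotient.mk p a}, f x = 0 := by
    intro x hx
    obtain ⟨c, rfl⟩ := Ideal.mem_span_singleton'.mp hx
    simp [f, Ideal.Quotient.eq_zero_iff_mem.mpr haq]
  exact ringKrullDim_le_of_surjective (Ideal.Quotient.lift _ f hf)
    (Ideal.Quotient.lift_surjective_of_surjective _ _ (Ideal.Quotient.factor_surjective hpq))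

theorem depth_le_dim {A : Type} [CommRing A] [IsNoetherianRing A] [IsLocalRing A]
    (rs : List A) : ∀ (M : Type) [AddCommGroup M] [Module A M] [Module.Finite A M]
    (_ : ∀ r ∈ rs, r ∈ maximalIdeal A) (_ : IsWeaklyRegular M rs)
    (p : Ideal A) (_ : IsAssociatedPrime p M), (rs.length : WithBot ℕ∞) ≤ ringKrullDim (A ⧸ p) := by
  induction rs with
  | nil =>
    intro M _ _ _ _ _ p hp
    have := hp.isPrime
    simpa using ringKrullDim_nonneg_of_nontrivial (R := A ⧸ p)
  | cons a rs ih =>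
    intro M _ _ _ hm hreg p hp
    rw [isWeaklyRegular_cons_iff] at hreg
    obtain ⟨q, hq, hpq, haq⟩ := ass_step (hm a (by simp)) hreg.1 hp
    have := hp.isPrime
    have := hq.isPrime
    have hap : a ∉ p := by
      intro h
      obtain ⟨hpp, x, hx⟩ := isAssociatedPrime_iff.mp hp
      rw [hx, Submodule.mem_colon_singleton, Submodule.mem_bot] at h
      have hx0 : x = 0 := hreg.1 (by simpa using h)
      subst hx0
      exact hpp.ne_top (by rw [hx]; simp [Ideal.eq_top_iff_one, Submodule.mem_colon_singleton])
    have h1 := ih (QuotSMulTop a M) (fun r hr => hm r (by simp [hr])) hreg.2 q hq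
    refine le_trans ?_ (dim_step hpq hap haq)
    rw [List.length_cons, Nat.cast_succ]
    gcongr

theorem dim_le_card {A : Type} [CommRing A] [IsNoetherianRing A] [IsLocalRing A]
    (Fs : List A) (hm : ∀ r ∈ Fs, r ∈ maximalIdeal A) (p : Ideal A) [p.IsPrime]
    (h : ∀ q : Ideal A, q.IsPrime → p ≤ q → (∀ f ∈ Fs, f ∈ q) → q = maximalIdeal A) :
    ringKrullDim (A ⧸ p) ≤ (Fs.length : WithBot ℕ∞) := by
  classical
  let s : Finset (A ⧸ p) := (Fs.map (Ideal.Quotient.mk p)).toFinset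
  have hs : (s : Set (A ⧸ p)) ⊆ Ring.jacobson (A ⧸ p) := by
    intro x hx
    simp only [s, List.coe_toFinset, List.mem_map] at hx
    obtain ⟨f, hf, rfl⟩ := hx
    rw [SetLike.mem_coe, ← Ideal.jacobson_bot]
    have : IsLocalRing (A ⧸ p) := IsLocalRing.of_surjective' _ Ideal.Quotient.mk_surjective
    rw [IsLocalRing.jacobson_eq_maximalIdeal _ bot_ne_top, mem_maximalIdeal, mem_nonunits_iff]
    intro hu
    obtain ⟨b, hb⟩ := isUnit_iff_exists_inv.mp hu
    obtain ⟨b, rfl⟩ := Ideal.Quotient.mk_surjective b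
    rw [← map_mul, ← map_one (Ideal.Quotient.mk p), Ideal.Quotient.eq] at hb
    have h1 := le_maximalIdeal (Ideal.IsPrime.ne_top ‹p.IsPrime›) hb
    have h2 := Ideal.mul_mem_right b _ (hm f hf)
    have h3 := Ideal.sub_mem _ h2 h1
    rw [sub_sub_cancel] at h3
    exact (maximalIdeal.isMaximal A).ne_top ((Ideal.eq_top_iff_one _).mpr h3)
  refine le_trans (ringKrullDim_le_ringKrullDim_quotient_add_card s hs) ?_
  have h0 : ringKrullDim ((A ⧸ p) ⧸ Ideal.span (s : Set (A ⧸ p))) ≤ 0 := by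
    have : Ring.KrullDimLE 0 ((A ⧸ p) ⧸ Ideal.span (s : Set (A ⧸ p))) := by
      apply Ring.KrullDimLE.mk₀
      intro I hI
      let φ : A →+* ((A ⧸ p) ⧸ Ideal.span (s : Set (A ⧸ p))) :=
        (Ideal.Quotient.mk _).comp (Ideal.Quotient.mk p)
      have hφ : Function.Surjective φ :=
        Ideal.Quotient.mk_surjective.comp Ideal.Quotient.mk_surjective
      have hq := h (I.comap φ) inferInstance (by
        intro x hx
        have : φ x = 0 := by simp [φ, Ideal.Quotient.eq_zero_iff_mem.mpr hx]
        simp [Ideal.mem_comap, this]) (by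
        intro f hf
        have : φ f = 0 := by
          simp only [φ, RingHom.comp_apply]
          rw [Ideal.Quotient.eq_zero_iff_mem]
          apply Ideal.subset_span
          simp only [s, List.coe_toFinset, List.mem_map]
          exact ⟨f, hf, rfl⟩
        simp [Ideal.mem_comap, this])
      have : (I.comap φ).IsMaximal := hq ▸ maximalIdeal.isMaximal A
      have h2 := Ideal.map_eq_top_or_isMaximal_of_surjective φ hφ this
      rw [Ideal.map_comap_of_surjective φ hφ] at h2
      exact h2.resolve_left hI.ne_top
    exact Ring.krullDimLE_iff.mp this
  have hc : s.card ≤ Fs.length := by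
    simpa [s] using (Fs.map (Ideal.Quotient.mk p)).toFinset_card_le
  calc _ ≤ (0 : WithBot ℕ∞) + (s.card : WithBot ℕ∞) := by gcongr
    _ ≤ _ := by rw [zero_add]; exact_mod_cast hc

theorem exists_regular_quot {A M : Type} [CommRing A] [IsNoetherianRing A] [IsLocalRing A]
    [AddCommGroup M] [Module A M] [Module.Finite A M] [Nontrivial M] {n : ℕ}
    (h : ∃ rs : List A, rs.length = n + 1 ∧ (∀ r ∈ rs, r ∈ maximalIdeal A) ∧ IsRegular M rs)
    {F : A} (hF : F ∈ maximalIdeal A) (hreg : IsSMulRegular M F) :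
    ∃ rs : List A, rs.length = n ∧ (∀ r ∈ rs, r ∈ maximalIdeal A) ∧
      IsRegular (QuotSMulTop F M) rs := by
  have lt : ∀ (L : Type) [AddCommGroup L] [Module A L] [Module.Finite A L] [Nontrivial L],
      maximalIdeal A • (⊤ : Submodule A L) < ⊤ := by
    intro L _ _ _ _
    exact lt_top_iff_ne_top.mpr (Submodule.top_ne_ideal_smul_of_le_jacobson_annihilator
      (maximalIdeal_le_jacobson _)).symm
  have hn := nontrivial_quotSMulTop_of_mem_maximalIdeal M hF
  have e1 := ((ModuleCat.exists_isRegular_tfae (maximalIdeal A) (n+1) (ModuleCat.of A M)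
    (lt M)).out 1 3).mpr h
  refine ((ModuleCat.exists_isRegular_tfae (maximalIdeal A) n (ModuleCat.of A (QuotSMulTop F M))
    (lt (QuotSMulTop F M))).out 1 3).mp ?_
  intro i hi
  have zero1 := AddCommGrpCat.isZero_of_iff_subsingleton.mpr (e1 i (by omega))
  have zero2 := AddCommGrpCat.isZero_of_iff_subsingleton.mpr (e1 (i + 1) (by omega))
  have hreg' : IsSMulRegular (ModuleCat.of A M) F := hreg
  exact AddCommGrpCat.subsingleton_of_isZero <| ShortComplex.Exact.isZero_of_both_zeros
    ((Ext.covariant_sequence_exact₃' _ hreg'.smulShortComplex_shortExact) i (i + 1) rfl)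
    (zero1.eq_zero_of_src _) (zero2.eq_zero_of_tgt _)

theorem weaklyRegular_of_sop {A : Type} [CommRing A] [IsNoetherianRing A] [IsLocalRing A]
    (Fs : List A) : ∀ (M : Type) [AddCommGroup M] [Module A M] [Module.Finite A M] [Nontrivial M]
    (_ : ∃ rs : List A, rs.length = Fs.length ∧ (∀ r ∈ rs, r ∈ maximalIdeal A) ∧ IsRegular M rs)
    (_ : ∀ r ∈ Fs, r ∈ maximalIdeal A)
    (_ : ∀ q : Ideal A, q.IsPrime → Module.annihilator A M ≤ q → (∀ f ∈ Fs, f ∈ q) →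
      q = maximalIdeal A),
    IsWeaklyRegular M Fs := by
  induction Fs with
  | nil => intro M _ _ _ _ _ _ _; exact IsWeaklyRegular.nil A M
  | cons F Fs ih =>
    intro M _ _ _ _ hex hm hq
    have hFm : F ∈ maximalIdeal A := hm F (by simp)
    have hm' : ∀ r ∈ Fs, r ∈ maximalIdeal A := fun r hr => hm r (by simp [hr])
    have hF : IsSMulRegular M F := by
      by_contra hcon
      have : F ∈ ⋃ p ∈ associatedPrimes A M, (p : Set A) := by
        rw [biUnion_associatedPrimes_eq_compl_regular]; exact hcon
      simp only [Set.mem_iUnion, SetLike.mem_coe] at this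
      obtain ⟨p, hp, hFp⟩ := this
      have hpp : p.IsPrime := hp.isPrime
      obtain ⟨rs, hlen, hrm, hrs⟩ := hex
      have h1 := depth_le_dim rs M hrm hrs.toIsWeaklyRegular p hp
      have h2 := dim_le_card Fs hm' p (by
        intro q hqp hpq hf
        refine hq q hqp ?_ ?_
        · have := IsAssociatedPrime.annihilator_le hp
          rw [Submodule.annihilator_top] at this
          exact this.trans hpq
        · intro f hf'
          rcases List.mem_cons.mp hf' with rfl | h
          · exact hpq hFp
          · exact hf f h)
      have h3 := h1.trans h2
      rw [hlen] at h3
      simp only [List.length_cons] at h3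
      have : Fs.length + 1 ≤ Fs.length := by exact_mod_cast h3
      omega
    rw [isWeaklyRegular_cons_iff]
    have hn := nontrivial_quotSMulTop_of_mem_maximalIdeal M hFm
    refine ⟨hF, ih (QuotSMulTop F M) (exists_regular_quot (by simpa using hex) hFm hF) hm' ?_⟩
    intro q hqp hann hf
    refine hq q hqp ?_ ?_
    · refine le_trans ?_ hann
      exact LinearMap.annihilator_le_of_surjective (Submodule.mkQ _) (Submodule.mkQ_surjective _)
    · intro f hf'
      rcases List.mem_cons.mp hf' with rfl | h
      · apply hann
        rw [Module.mem_annihilator]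
        intro y
        obtain ⟨y, rfl⟩ := Submodule.Quotient.mk_surjective _ y
        rw [← Submodule.Quotient.mk_smul, Submodule.Quotient.mk_eq_zero,
          Submodule.mem_smul_pointwise_iff_exists]
        exact ⟨y, trivial, rfl⟩
      · exact hf f h

end LocalAlgebra
section Graded
open MvPolynomial RingTheory.Sequence

variable {σ : Type}

/-- homogeneity of an ideal, spelled out -/
def HomId (w : σ → ℕ) (H : Ideal (MvPolynomial σ ℂ)) : Prop :=
  ∀ p ∈ H, ∀ m, weightedHomogeneousComponent w m p ∈ H

theorem homId_span (w : σ → ℕ) (S : Set (MvPolynomial σ ℂ))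
    (hS : ∀ f ∈ S, ∃ e, IsWeightedHomogeneous w f e) : HomId w (Ideal.span S) := by
  classical
  let := MvPolynomial.weightedGradedAlgebra ℂ w
  have h : (Ideal.span S).IsHomogeneous (weightedHomogeneousSubmodule ℂ w) :=
    Ideal.homogeneous_span _ _ fun x hx => hS x hx
  intro p hp m
  exact weightedHomogeneousComponent_mem_of_mem ℂ w h hp m

theorem mem_of_comp (w : σ → ℕ) (H : Ideal (MvPolynomial σ ℂ)) (p : MvPolynomial σ ℂ)
    (h : ∀ m, weightedHomogeneousComponent w m p ∈ H) : p ∈ H := by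
  rw [← finsum_weightedHomogeneousComponent w p]
  exact finsum_induction (· ∈ H) H.zero_mem (fun a b => H.add_mem) h

theorem comp_mul (w : σ → ℕ) {F : MvPolynomial σ ℂ} {e : ℕ} (hF : IsWeightedHomogeneous w F e)
    (u : MvPolynomial σ ℂ) (m : ℕ) :
    weightedHomogeneousComponent w (e + m) (F * u) = F * weightedHomogeneousComponent w m u := by
  classical
  ext d
  rw [coeff_weightedHomogeneousComponent, coeff_mul, coeff_mul]
  simp only [coeff_weightedHomogeneousComponent]
  split_ifs with h
  · apply Finset.sum_congr rfl
    intro x hx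
    rw [Finset.HasAntidiagonal.mem_antidiagonal] at hx
    by_cases hc : coeff x.1 F = 0
    · simp [hc]
    · have h1 := hF hc
      rw [← hx, map_add, h1] at h
      rw [if_pos (by omega)]
  · symm
    apply Finset.sum_eq_zero
    intro x hx
    rw [Finset.HasAntidiagonal.mem_antidiagonal] at hx
    by_cases hc : coeff x.1 F = 0
    · simp [hc]
    · have h1 := hF hc
      rw [← hx, map_add, h1] at h
      rw [if_neg (by omega), mul_zero]

theorem comp_mul_lt (w : σ → ℕ) {F : MvPolynomial σ ℂ} {e : ℕ} (hF : IsWeightedHomogeneous w F e)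
    (u : MvPolynomial σ ℂ) {m : ℕ} (hm : m < e) :
    weightedHomogeneousComponent w m (F * u) = 0 := by
  classical
  ext d
  rw [coeff_weightedHomogeneousComponent, coeff_mul]
  split_ifs with h
  · rw [coeff_zero]
    apply Finset.sum_eq_zero
    intro x hx
    rw [Finset.HasAntidiagonal.mem_antidiagonal] at hx
    by_cases hc : coeff x.1 F = 0
    · simp [hc]
    · have h1 := hF hc
      rw [← hx, map_add, h1] at h
      omega
  · simp

theorem weight_pos (w : σ → ℕ) (hw : ∀ i, 0 < w i) (d : σ →₀ ℕ) (hd : d ≠ 0) :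
    0 < Finsupp.weight w d := by
  obtain ⟨i, hi⟩ := Finsupp.ne_iff.mp hd
  have := Finsupp.le_weight_of_ne_zero' w (s := i) (f := d) (by simpa using hi)
  exact lt_of_lt_of_le (hw i) this

theorem coeff_pow_mul (w : σ → ℕ) (hw : ∀ i, 0 < w i) (t y : MvPolynomial σ ℂ)
    (ht : constantCoeff t = 0) (N : ℕ) : ∀ d, Finsupp.weight w d < N → coeff d (t ^ N * y) = 0 := by
  classical
  induction N with
  | zero => intro d hd; omega
  | succ N ih =>
    intro d hd
    rw [pow_succ', mul_assoc, coeff_mul]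
    apply Finset.sum_eq_zero
    intro x hx
    rw [Finset.HasAntidiagonal.mem_antidiagonal] at hx
    by_cases h0 : x.1 = 0
    · rw [h0, ← constantCoeff_eq, ht, zero_mul]
    · have := weight_pos w hw _ h0
      rw [← hx, map_add] at hd
      rw [ih _ (by omega), mul_zero]

theorem mem_of_mul_mem (w : σ → ℕ) (hw : ∀ i, 0 < w i) {H : Ideal (MvPolynomial σ ℂ)}
    (hH : HomId w H) {s y : MvPolynomial σ ℂ} (hs : constantCoeff s ≠ 0) (h : s * y ∈ H) :
    y ∈ H := by
  classical
  set c := constantCoeff s with hc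
  let t : MvPolynomial σ ℂ := 1 - C c⁻¹ * s
  have ht : constantCoeff t = 0 := by simp [t, ← hc, hs]
  have hty : y - t * y ∈ H := by
    have : y - t * y = C c⁻¹ * (s * y) := by simp only [t]; ring
    rw [this]; exact H.mul_mem_left _ h
  have hN : ∀ N, y - t ^ N * y ∈ H := by
    intro N
    induction N with
    | zero => simp
    | succ N ih =>
      have : y - t ^ (N+1) * y = (y - t ^ N * y) + t ^ N * (y - t * y) := by ring
      rw [this]; exact H.add_mem ih (H.mul_mem_left _ hty)
  apply mem_of_comp w
  intro m
  have h1 := hH _ (hN (m+1)) m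
  rw [map_sub] at h1
  have h2 : weightedHomogeneousComponent w m (t ^ (m+1) * y) = 0 := by
    ext d
    rw [coeff_weightedHomogeneousComponent, coeff_zero]
    split_ifs with hd
    · exact coeff_pow_mul w hw t y ht _ d (by omega)
    · rfl
  rwa [h2, sub_zero] at h1

/-- Elementwise regular sequences. -/
def RegSeq (Fs : List (MvPolynomial σ ℂ)) : Prop :=
  ∀ i (h : i < Fs.length), ∀ x, Fs[i] * x ∈ Ideal.ofList (Fs.take i) →
    x ∈ Ideal.ofList (Fs.take i)

theorem regSeq_iff (Fs : List (MvPolynomial σ ℂ)) :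
    RegSeq Fs ↔ IsWeaklyRegular (MvPolynomial σ ℂ) Fs := by
  rw [isWeaklyRegular_iff]
  simp only [isSMulRegular_quotient_iff_mem_of_smul_mem, smul_eq_mul, Ideal.mul_top]
  rfl

theorem regSeq_X (l : List σ) (hl : l.Nodup) :
    RegSeq (l.map (X : σ → MvPolynomial σ ℂ)) := by
  classical
  intro i hi x hx
  have e : Ideal.ofList ((l.map (X : σ → MvPolynomial σ ℂ)).take i) =
      Ideal.span (Set.image X {a | a ∈ l.take i}) := by
    rw [← List.map_take]
    simp only [Ideal.ofList]
    congr 1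
    ext x
    exact List.mem_map
  rw [e] at hx ⊢
  simp only [List.length_map] at hi
  rw [mem_ideal_span_X_image] at hx ⊢
  intro m hm
  have hi' : l[i] ∉ l.take i := by
    intro h
    obtain ⟨j, hj, hji⟩ := List.mem_take_iff_getElem.mp h
    have := (List.Nodup.getElem_inj_iff hl).mp hji
    omega
  obtain ⟨a, ha, hma⟩ := hx (Finsupp.single l[i] 1 + m) (by
    rw [List.getElem_map, mem_support_iff, coeff_X_mul]
    exact mem_support_iff.mp hm)
  refine ⟨a, ha, ?_⟩
  have : l[i] ≠ a := fun h => hi' (h ▸ ha)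
  simpa [Finsupp.single_apply, this] using hma

theorem regSeq_of_finite [Finite σ] (w : σ → ℕ) (hw : ∀ i, 0 < w i)
    (Fs : List (MvPolynomial σ ℂ)) (hlen : Fs.length = Nat.card σ)
    (hF : ∀ f ∈ Fs, ∃ e, 0 < e ∧ IsWeightedHomogeneous w f e)
    (hfin : FiniteDimensional ℂ (MvPolynomial σ ℂ ⧸ Ideal.ofList Fs)) : RegSeq Fs := by
  classical
  have := Fintype.ofFinite σ
  let m : Ideal (MvPolynomial σ ℂ) := RingHom.ker (constantCoeff (R := ℂ) (σ := σ))
  have hmmax : m.IsMaximal := RingHom.ker_isMaximal_of_surjective _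
    fun c => ⟨C c, by simp⟩
  let A := Localization.AtPrime m
  have hmax : ∀ x, algebraMap (MvPolynomial σ ℂ) A x ∈ IsLocalRing.maximalIdeal A ↔ x ∈ m :=
    fun x => IsLocalization.AtPrime.to_map_mem_maximal_iff A m x
  have hFm : ∀ f ∈ Fs, f ∈ m := by
    intro f hf
    obtain ⟨e, he, hfe⟩ := hF f hf
    rw [RingHom.mem_ker, constantCoeff_eq]
    by_contra hc
    have := hfe hc
    simp at this
    omega
  have hwr : IsWeaklyRegular A (Fs.map (algebraMap (MvPolynomial σ ℂ) A)) := by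
    apply weaklyRegular_of_sop
    · let l := (Finset.univ : Finset σ).toList
      refine ⟨(l.map X).map (algebraMap (MvPolynomial σ ℂ) A), by simp [l, hlen], ?_, ?_⟩
      · intro r hr
        simp only [List.mem_map] at hr
        obtain ⟨x, ⟨i, -, rfl⟩, rfl⟩ := hr
        rw [hmax]
        simp [m]
      · apply IsRegular.of_isWeaklyRegular_of_mem_maximalIdeal
        · intro r hr
          simp only [List.mem_map] at hr
          obtain ⟨x, ⟨i, -, rfl⟩, rfl⟩ := hr
          rw [hmax]
          simp [m]
        · exact IsWeaklyRegular.of_isLocalization A m.primeCompl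
            ((regSeq_iff _).mp (regSeq_X l (Finset.nodup_toList _)))
    · intro r hr
      simp only [List.mem_map] at hr
      obtain ⟨x, hx, rfl⟩ := hr
      exact (hmax x).mpr (hFm x hx)
    · intro q hq _ hf
      let p := q.comap (algebraMap (MvPolynomial σ ℂ) A)
      have hp : p.IsPrime := inferInstance
      have hle : Ideal.ofList Fs ≤ p := Ideal.span_le.mpr fun f hfs =>
        hf _ (List.mem_map.mpr ⟨f, hfs, rfl⟩)
      have hfp : FiniteDimensional ℂ (MvPolynomial σ ℂ ⧸ p) :=
        Module.Finite.of_surjective (Ideal.Quotient.factorₐ ℂ hle).toLinearMap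
          (Ideal.Quotient.factor_surjective hle)
      have hfield : IsField (MvPolynomial σ ℂ ⧸ p) :=
        isField_of_isIntegral_of_isField' (Field.toIsField ℂ)
      have hpmax : p.IsMaximal := Ideal.Quotient.maximal_of_isField p hfield
      have hpm : p ≤ m := by
        intro x hx
        rw [← hmax]
        exact IsLocalRing.le_maximalIdeal hq.ne_top hx
      have hpm' : p = m := hpmax.eq_of_le hmmax.ne_top hpm
      rw [← IsLocalization.map_under m.primeCompl A q]
      change Ideal.map _ p = _
      rw [hpm']
      exact Localization.AtPrime.map_eq_maximalIdeal
  rw [isWeaklyRegular_iff] at hwr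
  intro i hi x hx
  have h1 := hwr i (by simpa using hi)
  rw [isSMulRegular_quotient_iff_mem_of_smul_mem] at h1
  have h2 := h1 (algebraMap _ A x)
  simp only [smul_eq_mul, Ideal.mul_top, ← List.map_take, List.getElem_map, ← map_mul,
    ← Ideal.map_ofList] at h2
  have h3 := h2 (Ideal.mem_map_of_mem _ hx)
  rw [IsLocalization.algebraMap_mem_map_algebraMap_iff m.primeCompl] at h3
  obtain ⟨s, hs, hsx⟩ := h3
  refine mem_of_mul_mem w hw (homId_span w _ ?_) (s := s) ?_ hsx
  · intro f hf
    obtain ⟨e, -, h⟩ := hF f (List.mem_of_mem_take hf)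
    exact ⟨e, h⟩
  · exact fun h => hs h

end Graded
section Hilbert
open MvPolynomial

variable {σ : Type}

/-- image of the degree `m` part in the quotient -/
noncomputable def Wq (w : σ → ℕ) (H : Ideal (MvPolynomial σ ℂ)) (m : ℕ) :
    Submodule ℂ (MvPolynomial σ ℂ ⧸ H.restrictScalars ℂ) :=
  (weightedHomogeneousSubmodule ℂ w m).map (H.restrictScalars ℂ).mkQ

/-- Hilbert function -/
noncomputable def hf (w : σ → ℕ) (H : Ideal (MvPolynomial σ ℂ)) (m : ℕ) : ℕ :=
  Module.finrank ℂ (Wq w H m)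

/-- Hilbert series -/
noncomputable def hs (w : σ → ℕ) (H : Ideal (MvPolynomial σ ℂ)) : PowerSeries ℤ :=
  PowerSeries.mk fun m => (hf w H m : ℤ)

theorem finite_whs [Finite σ] (w : σ → ℕ) (hw : ∀ i, 0 < w i) (m : ℕ) :
    FiniteDimensional ℂ (weightedHomogeneousSubmodule ℂ w m) :=
  Module.Finite.iff_fg.mpr (weightedHomogeneousSubmodule_fg ℂ w (fun i => (hw i).ne') m)

theorem hf_add [Finite σ] (w : σ → ℕ) (hw : ∀ i, 0 < w i) (H : Ideal (MvPolynomial σ ℂ)) (m : ℕ) :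
    hf w H m + Module.finrank ℂ
      (weightedHomogeneousSubmodule ℂ w m ⊓ H.restrictScalars ℂ :
        Submodule ℂ (MvPolynomial σ ℂ)) =
      Module.finrank ℂ (weightedHomogeneousSubmodule ℂ w m) := by
  have := finite_whs w hw m
  rw [← LinearMap.finrank_range_add_finrank_ker
    ((H.restrictScalars ℂ).mkQ.domRestrict (weightedHomogeneousSubmodule ℂ w m))]
  rw [LinearMap.range_domRestrict, LinearMap.ker_domRestrict, Submodule.ker_mkQ]
  congr 1
  rw [← Submodule.map_comap_subtype, Submodule.finrank_map_subtype_eq]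

theorem hf_step_lt (w : σ → ℕ) (H : Ideal (MvPolynomial σ ℂ))
    (hH : HomId w H) (F : MvPolynomial σ ℂ) (e : ℕ) (hF : IsWeightedHomogeneous w F e)
    (m : ℕ) (hm : m < e) :
    weightedHomogeneousSubmodule ℂ w m ⊓ (H ⊔ Ideal.span {F}).restrictScalars ℂ =
      weightedHomogeneousSubmodule ℂ w m ⊓ H.restrictScalars ℂ := by
  apply le_antisymm
  · rintro x ⟨hx, hx'⟩
    refine ⟨hx, ?_⟩
    rw [SetLike.mem_coe, Submodule.restrictScalars_mem, Submodule.mem_sup] at hx'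
    obtain ⟨y, hy, z, hz, rfl⟩ := hx'
    obtain ⟨u, rfl⟩ := Ideal.mem_span_singleton'.mp hz
    have h1 := weightedHomogeneousComponent_of_mem (m := m) hx
    rw [if_pos rfl, map_add, mul_comm u, comp_mul_lt w hF u hm, add_zero] at h1
    rw [mul_comm u, ← h1]
    exact hH _ hy m
  · exact inf_le_inf_left _ (fun x hx => Ideal.mem_sup_left hx)

theorem hf_step_ge (w : σ → ℕ) (H : Ideal (MvPolynomial σ ℂ))
    (hH : HomId w H) (F : MvPolynomial σ ℂ) (e : ℕ) (hF : IsWeightedHomogeneous w F e)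
    (m : ℕ) :
    weightedHomogeneousSubmodule ℂ w (e + m) ⊓ (H ⊔ Ideal.span {F}).restrictScalars ℂ =
      (weightedHomogeneousSubmodule ℂ w (e + m) ⊓ H.restrictScalars ℂ) ⊔
      (weightedHomogeneousSubmodule ℂ w m).map (LinearMap.mulLeft ℂ F) := by
  apply le_antisymm
  · rintro x ⟨hx, hx'⟩
    rw [SetLike.mem_coe, Submodule.restrictScalars_mem, Submodule.mem_sup] at hx'
    obtain ⟨y, hy, z, hz, rfl⟩ := hx'
    obtain ⟨u, rfl⟩ := Ideal.mem_span_singleton'.mp hz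
    have h1 := weightedHomogeneousComponent_of_mem (m := e + m) hx
    rw [if_pos rfl, map_add, mul_comm u, comp_mul w hF u] at h1
    rw [mul_comm u, ← h1]
    apply Submodule.add_mem_sup
    · exact ⟨weightedHomogeneousComponent_mem _ _ _, hH _ hy _⟩
    · exact ⟨_, weightedHomogeneousComponent_mem _ _ _, rfl⟩
  · apply sup_le
    · exact inf_le_inf_left _ (fun x hx => Ideal.mem_sup_left hx)
    · rintro _ ⟨u, hu, rfl⟩
      refine ⟨IsWeightedHomogeneous.mul hF hu, ?_⟩
      exact Ideal.mem_sup_right (Ideal.mul_mem_right _ _ (Ideal.mem_span_singleton_self F))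

theorem hf_step_inf (w : σ → ℕ) (H : Ideal (MvPolynomial σ ℂ))
    (F : MvPolynomial σ ℂ) (e : ℕ) (hF : IsWeightedHomogeneous w F e)
    (hreg : ∀ x, F * x ∈ H → x ∈ H) (m : ℕ) :
    (weightedHomogeneousSubmodule ℂ w (e + m) ⊓ H.restrictScalars ℂ) ⊓
      (weightedHomogeneousSubmodule ℂ w m).map (LinearMap.mulLeft ℂ F) =
    (weightedHomogeneousSubmodule ℂ w m ⊓ H.restrictScalars ℂ).map (LinearMap.mulLeft ℂ F) := by
  apply le_antisymm
  · rintro _ ⟨⟨_, hx⟩, ⟨u, hu, rfl⟩⟩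
    exact ⟨u, ⟨hu, hreg _ hx⟩, rfl⟩
  · rintro _ ⟨u, ⟨hu, hx⟩, rfl⟩
    exact ⟨⟨IsWeightedHomogeneous.mul hF hu, H.mul_mem_left _ hx⟩, ⟨u, hu, rfl⟩⟩

theorem hf_top (w : σ → ℕ) (m : ℕ) : hf w (⊤ : Ideal (MvPolynomial σ ℂ)) m = 0 := by
  have : Subsingleton (MvPolynomial σ ℂ ⧸ (⊤ : Ideal (MvPolynomial σ ℂ)).restrictScalars ℂ) :=
    Submodule.Quotient.subsingleton_iff.mpr rfl
  exact Module.finrank_zero_of_subsingleton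

theorem hs_step [Finite σ] (w : σ → ℕ) (hw : ∀ i, 0 < w i) (H : Ideal (MvPolynomial σ ℂ))
    (hH : HomId w H) (F : MvPolynomial σ ℂ) (e : ℕ) (hF : IsWeightedHomogeneous w F e)
    (hreg : ∀ x, F * x ∈ H → x ∈ H) :
    hs w (H ⊔ Ideal.span {F}) = hs w H * (1 - PowerSeries.X ^ e) := by
  by_cases hF0 : F = 0
  · have : H = ⊤ := by
      rw [Ideal.eq_top_iff_one]; apply hreg; simp [hF0]
    subst this
    have hz : hs w (⊤ : Ideal (MvPolynomial σ ℂ)) = 0 := by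
      ext m
      simp [hs, hf_top]
    rw [top_sup_eq, hz, zero_mul]
  have hinj : Function.Injective (LinearMap.mulLeft ℂ F) := mul_right_injective₀ hF0
  ext m
  rw [mul_sub, mul_one, map_sub, mul_comm, PowerSeries.coeff_X_pow_mul']
  simp only [hs, PowerSeries.coeff_mk]
  split_ifs with h
  · obtain ⟨j, rfl⟩ := Nat.exists_eq_add_of_le h
    rw [Nat.add_sub_cancel_left]
    have a1 := hf_add w hw H (e + j)
    have a2 := hf_add w hw (H ⊔ Ideal.span {F}) (e + j)
    have a3 := hf_add w hw H j
    have := finite_whs w hw j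
    have := finite_whs w hw (e + j)
    have a4 := Submodule.finrank_sup_add_finrank_inf_eq
      (weightedHomogeneousSubmodule ℂ w (e + j) ⊓ H.restrictScalars ℂ)
      ((weightedHomogeneousSubmodule ℂ w j).map (LinearMap.mulLeft ℂ F))
    rw [hf_step_inf w H F e hF hreg, ← hf_step_ge w H hH F e hF,
      ← LinearEquiv.finrank_eq (Submodule.equivMapOfInjective _ hinj _),
      ← LinearEquiv.finrank_eq (Submodule.equivMapOfInjective _ hinj _)] at a4
    omega
  · have a1 := hf_add w hw H m
    have a2 := hf_add w hw (H ⊔ Ideal.span {F}) m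
    rw [hf_step_lt w H hH F e hF m (by omega)] at a2
    omega

theorem hs_list [Finite σ] (w : σ → ℕ) (hw : ∀ i, 0 < w i) (L : List (MvPolynomial σ ℂ × ℕ))
    (hL : ∀ x ∈ L, IsWeightedHomogeneous w x.1 x.2) (hreg : RegSeq (L.map Prod.fst)) :
    hs w (Ideal.ofList (L.map Prod.fst)) =
      hs w ⊥ * (L.map fun x => 1 - (PowerSeries.X : PowerSeries ℤ) ^ x.2).prod := by
  induction L using List.reverseRecOn with
  | nil => simp
  | append_singleton L a ih =>
    have h1 : RegSeq (L.map Prod.fst) := by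
      intro i hi x hx
      simp only [List.map_append] at hreg
      have := hreg i (by simp at hi ⊢; omega) x
      rw [List.take_append_of_le_length hi.le,
        List.getElem_append_left hi] at this
      exact this hx
    have h2 := hreg L.length (by simp)
    have h3 := ih (fun x hx => hL x (by simp [hx])) h1
    simp only [List.map_append, List.map_cons, List.map_nil] at h2 ⊢
    rw [List.getElem_append_right (by simp)] at h2
    simp only [List.length_map, Nat.sub_self, List.getElem_cons_zero] at h2
    rw [List.take_append_of_le_length (by simp), List.take_of_length_le (by simp)] at h2
    rw [Ideal.ofList_append, Ideal.ofList_singleton, hs_step w hw _ _ a.1 a.2 (hL a (by simp)) h2,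
      h3, List.prod_append, List.prod_singleton, mul_assoc]
    apply homId_span
    intro f hf
    obtain ⟨x, hx, rfl⟩ := List.mem_map.mp hf
    exact ⟨x.2, hL x (by simp [hx])⟩

theorem hs_poly [Finite σ] (w : σ → ℕ) (H : Ideal (MvPolynomial σ ℂ))
    (hH : HomId w H) [FiniteDimensional ℂ (MvPolynomial σ ℂ ⧸ H)] :
    ∃ Q : Polynomial ℤ, hs w H = (Q : PowerSeries ℤ) ∧
      Q.eval 1 = (Module.finrank ℂ (MvPolynomial σ ℂ ⧸ H) : ℤ) := by
  classical
  let ee := Submodule.Quotient.restrictScalarsEquiv ℂ H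
  have hfd : FiniteDimensional ℂ (MvPolynomial σ ℂ ⧸ H.restrictScalars ℂ) :=
    Module.Finite.equiv ee.symm
  have hle : ∀ m, H.restrictScalars ℂ ≤
      (H.restrictScalars ℂ).comap (weightedHomogeneousComponent w m) := by
    intro m p hp
    exact hH p hp m
  let pi : ℕ → (MvPolynomial σ ℂ ⧸ H.restrictScalars ℂ) →ₗ[ℂ]
      (MvPolynomial σ ℂ ⧸ H.restrictScalars ℂ) := fun m =>
    Submodule.mapQ _ _ (weightedHomogeneousComponent w m)
      (hle m)
  have hpi : ∀ m j, ∀ x ∈ Wq w H j, pi m x = if m = j then x else 0 := by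
    rintro m j _ ⟨p, hp, rfl⟩
    simp only [pi, Submodule.mkQ_apply, Submodule.mapQ_apply]
    rw [weightedHomogeneousComponent_of_mem hp]
    split_ifs <;> simp
  have hind : iSupIndep (Wq w H) := by
    intro m
    rw [Submodule.disjoint_def]
    intro x hx hx'
    have h1 := hpi m m x hx
    rw [if_pos rfl] at h1
    have h2 : (⨆ j, ⨆ (_ : j ≠ m), Wq w H j) ≤ LinearMap.ker (pi m) := by
      refine iSup₂_le fun j hj y hy => ?_
      rw [LinearMap.mem_ker, hpi m j y hy, if_neg hj.symm]
    rw [← h1]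
    exact h2 hx'
  have hsup : ⨆ m, Wq w H m = ⊤ := by
    rw [eq_top_iff]
    rintro x -
    obtain ⟨p, rfl⟩ := (H.restrictScalars ℂ).mkQ_surjective x
    have : p ∈ (⨆ m, Wq w H m).comap (H.restrictScalars ℂ).mkQ := by
      rw [← finsum_weightedHomogeneousComponent w p]
      refine finsum_induction (· ∈ (⨆ m, Wq w H m).comap (H.restrictScalars ℂ).mkQ)
        (Submodule.zero_mem _) (fun a b => Submodule.add_mem _) fun m => ?_
      exact Submodule.mem_iSup_of_mem m ⟨_, weightedHomogeneousComponent_mem _ _ _, rfl⟩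
    exact this
  have hfinS : Finite {m // Wq w H m ≠ ⊥} := 
    WellFoundedGT.finite_ne_bot_of_iSupIndep hind
  have := Fintype.ofFinite {m // Wq w H m ≠ ⊥}
  have hintern := DirectSum.isInternal_submodule_of_iSupIndep_of_iSup_eq_top
    (A := fun m : {m // Wq w H m ≠ ⊥} => Wq w H m)
    (hind.comp Subtype.val_injective) (by rw [iSup_ne_bot_subtype, hsup])
  have hsum : Module.finrank ℂ (MvPolynomial σ ℂ ⧸ H) =
      ∑ m : {m // Wq w H m ≠ ⊥}, hf w H m := by
    rw [← ee.finrank_eq, ← (LinearEquiv.ofBijective (DirectSum.coeLinearMap _) hintern).finrank_eq, Module.finrank_directSum]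
    rfl
  refine ⟨∑ m : {m // Wq w H m ≠ ⊥}, Polynomial.monomial m.1 (hf w H m : ℤ), ?_, ?_⟩
  · ext m
    rw [Polynomial.coeff_coe, Polynomial.finsetSum_coeff]
    simp only [Polynomial.coeff_monomial, hs, PowerSeries.coeff_mk]
    by_cases hm : Wq w H m = ⊥
    · have : hf w H m = 0 := by rw [hf, hm]; simp
      rw [this, Finset.sum_eq_zero]
      · simp
      · intro x _
        rw [if_neg]
        rintro rfl
        exact x.2 hm
    · rw [Finset.sum_eq_single ⟨m, hm⟩]
      · simp
      · intro b _ hb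
        rw [if_neg]
        rintro rfl
        exact hb rfl
      · simp
  · rw [Polynomial.eval_finsetSum, hsum]
    simp

theorem one_sub_pow_prod {ι : Type*} [Fintype ι] (e : ι → ℕ) :
    ∏ i, (1 - (Polynomial.X : Polynomial ℤ) ^ e i) =
      (1 - Polynomial.X) ^ Fintype.card ι * ∏ i, ∑ j ∈ Finset.range (e i), Polynomial.X ^ j := by
  rw [← Finset.card_univ, ← Finset.prod_const, ← Finset.prod_mul_distrib]
  apply Finset.prod_congr rfl
  intro i _
  rw [mul_neg_geom_sum]

theorem finrank_X [Fintype σ] (H : Ideal (MvPolynomial σ ℂ))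
    (hH : H = Ideal.span (Set.range X)) :
    FiniteDimensional ℂ (MvPolynomial σ ℂ ⧸ H) ∧
    Module.finrank ℂ (MvPolynomial σ ℂ ⧸ H) = 1 := by
  have h : H = RingHom.ker (aeval (R := ℂ) (fun _ : σ => (0 : ℂ))) := by
    ext p
    rw [hH, ← Set.image_univ, mem_ideal_span_X_image, RingHom.mem_ker, aeval_zero',
      Algebra.algebraMap_self, RingHom.id_apply, constantCoeff_eq]
    constructor
    · intro h
      by_contra hc
      obtain ⟨i, -, hi⟩ := h 0 (mem_support_iff.mpr hc)
      simp at hi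
    · intro h m hm
      have : m ≠ 0 := by rintro rfl; exact mem_support_iff.mp hm h
      obtain ⟨i, hi⟩ := Finsupp.ne_iff.mp this
      exact ⟨i, trivial, hi⟩
  subst h
  let e := (Ideal.quotientKerAlgEquivOfSurjective
    (f := aeval (R := ℂ) (fun _ : σ => (0 : ℂ))) (fun c => ⟨C c, by simp⟩)).toLinearEquiv
  exact ⟨Module.Finite.equiv e.symm, by rw [e.finrank_eq]; simp⟩

theorem bezout {ι : Type} [Fintype σ] [Fintype ι] (w : σ → ℕ) (hw : ∀ i, 0 < w i)
    (F : ι → MvPolynomial σ ℂ) (e : ι → ℕ) (he : ∀ i, 0 < e i)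
    (hF : ∀ i, IsWeightedHomogeneous w (F i) (e i)) (hcard : Fintype.card ι = Fintype.card σ)
    (hfin : FiniteDimensional ℂ (MvPolynomial σ ℂ ⧸ Ideal.span (Set.range F))) :
    (∏ i, w i) * Module.finrank ℂ (MvPolynomial σ ℂ ⧸ Ideal.span (Set.range F)) = ∏ i, e i := by
  classical
  let L1 : List (MvPolynomial σ ℂ × ℕ) :=
    (Finset.univ : Finset ι).toList.map fun i => (F i, e i)
  let L2 : List (MvPolynomial σ ℂ × ℕ) :=
    (Finset.univ : Finset σ).toList.map fun i => (X i, w i)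
  have hL1 : Ideal.ofList (L1.map Prod.fst) = Ideal.span (Set.range F) := by
    rw [Ideal.ofList]; congr 1; ext x; simp [L1]
  have hL2 : Ideal.ofList (L2.map Prod.fst) = Ideal.span (Set.range X) := by
    rw [Ideal.ofList]; congr 1; ext x; simp [L2]
  have r1 : RegSeq (L1.map Prod.fst) := by
    apply regSeq_of_finite w hw
    · simp [L1, hcard]
    · intro f hf
      simp only [L1, List.map_map, List.mem_map] at hf
      obtain ⟨i, -, rfl⟩ := hf
      exact ⟨e i, he i, hF i⟩
    · rw [hL1]; exact hfin
  have r2 : RegSeq (L2.map Prod.fst) := by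
    have := regSeq_X (Finset.univ : Finset σ).toList (Finset.nodup_toList _)
    simpa [L2, Function.comp_def] using this
  have s1 := hs_list w hw L1 (by
    intro x hx
    obtain ⟨i, -, rfl⟩ := List.mem_map.mp hx
    exact hF i) r1
  have s2 := hs_list w hw L2 (by
    intro x hx
    obtain ⟨i, -, rfl⟩ := List.mem_map.mp hx
    exact isWeightedHomogeneous_X _ _ _) r2
  have p1 : (L1.map fun x => 1 - (PowerSeries.X : PowerSeries ℤ) ^ x.2).prod =
      ((∏ i, (1 - (Polynomial.X : Polynomial ℤ) ^ e i) : Polynomial ℤ) : PowerSeries ℤ) := by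
    simp only [L1, List.map_map, Function.comp_def]
    rw [Finset.prod_map_toList, ← Polynomial.coeToPowerSeries.ringHom_apply, map_prod]
    simp
  have p2 : (L2.map fun x => 1 - (PowerSeries.X : PowerSeries ℤ) ^ x.2).prod =
      ((∏ i, (1 - (Polynomial.X : Polynomial ℤ) ^ w i) : Polynomial ℤ) : PowerSeries ℤ) := by
    simp only [L2, List.map_map, Function.comp_def]
    rw [Finset.prod_map_toList, ← Polynomial.coeToPowerSeries.ringHom_apply, map_prod]
    simp
  rw [hL1, p1] at s1
  rw [hL2, p2] at s2
  obtain ⟨fx, dx⟩ := finrank_X (σ := σ) _ rfl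
  obtain ⟨Q1, hQ1, e1⟩ := hs_poly w (Ideal.span (Set.range F)) (homId_span w _ (by
    rintro _ ⟨i, rfl⟩; exact ⟨_, hF i⟩))
  obtain ⟨Q2, hQ2, e2⟩ := hs_poly w (Ideal.span (Set.range X)) (homId_span w _ (by
    rintro _ ⟨i, rfl⟩; exact ⟨_, isWeightedHomogeneous_X ℂ w i⟩))
  have key : Q1 * (∏ i, (1 - (Polynomial.X : Polynomial ℤ) ^ w i)) =
      Q2 * (∏ i, (1 - (Polynomial.X : Polynomial ℤ) ^ e i)) := by
    apply Polynomial.coe_injective ℤ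
    rw [Polynomial.coe_mul, Polynomial.coe_mul, ← hQ1, ← hQ2, s1, s2]
    ring
  rw [one_sub_pow_prod, one_sub_pow_prod, hcard, mul_left_comm, mul_left_comm Q2] at key
  have hne : (1 - Polynomial.X : Polynomial ℤ) ≠ 0 := by
    intro h
    have := congrArg (Polynomial.eval 0) h
    simp at this
  have key2 := congrArg (Polynomial.eval 1) (mul_left_cancel₀ (pow_ne_zero _ hne) key)
  simp only [Polynomial.eval_mul, Polynomial.eval_prod, Polynomial.eval_finsetSum,
    Polynomial.eval_pow, Polynomial.eval_X, one_pow, Finset.sum_const, Finset.card_range,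
    nsmul_eq_mul, mul_one, e1, e2, dx, Nat.cast_one, one_mul] at key2
  rw [mul_comm]
  exact_mod_cast key2

end Hilbert
section Application
open MvPolynomial

theorem det_hom {σ : Type} (w : σ → ℕ) {k : ℕ} (M : Matrix (Fin k) (Fin k) (MvPolynomial σ ℂ))
    (c : Fin k → ℕ) (h : ∀ a b, IsWeightedHomogeneous w (M a b) (c b)) :
    IsWeightedHomogeneous w M.det (∑ b, c b) := by
  rw [Matrix.det_apply]
  apply (weightedHomogeneousSubmodule ℂ w (∑ b, c b)).sum_mem
  intro s _
  have h1 : IsWeightedHomogeneous w (∏ i, M (s i) i) (∑ b, c b) :=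
    IsWeightedHomogeneous.prod _ _ _ fun i _ => h _ _
  rw [Units.smul_def]
  exact (weightedHomogeneousSubmodule ℂ w (∑ b, c b)).smul_of_tower_mem _ h1

theorem Vdm_eq (n k : ℕ) : Vdm n k = (Matrix.vandermonde
    (fun a : Fin k => (X (Sum.inr a) : MvPolynomial (Fin (n - 1) ⊕ Fin k) ℂ))).det := by
  rw [Matrix.det_vandermonde, Vdm, Finset.prod_filter, Fintype.prod_prod_type]
  apply Finset.prod_congr rfl
  intro a _
  rw [← Finset.prod_filter, Finset.filter_lt_eq_Ioi]

theorem Vdm_ne (n k : ℕ) : Vdm n k ≠ 0 := by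
  rw [Vdm_eq, Matrix.det_vandermonde_ne_zero_iff]
  intro a b h
  exact Sum.inr_injective (X_injective h)

theorem V_weight {n k : ℕ} (w : Fin (n - 1) → ℕ) (wn : ℕ)
    (g : MvPolynomial (Fin (n - 1) ⊕ Unit) ℂ) (D : ℕ)
    (hg : g.IsWeightedHomogeneous (Sum.elim w fun _ => wn) D) (i : Fin k)
    (V : MvPolynomial (Fin (n - 1) ⊕ Fin k) ℂ) (hV : (Mmat g i).det = V * Vdm n k)
    (m : Fin (n - 1) ⊕ Fin k →₀ ℕ) (hm : coeff m V ≠ 0) :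
    Finsupp.weight (Sum.elim w fun _ : Fin k => wn) m + i * wn = D := by
  classical
  set W : Fin (n - 1) ⊕ Fin k → ℕ := Sum.elim w fun _ : Fin k => wn with hW
  have hX : ∀ (a : Fin k) (b : ℕ), IsWeightedHomogeneous W
      ((X (Sum.inr a) : MvPolynomial (Fin (n - 1) ⊕ Fin k) ℂ) ^ b) (b * wn) := by
    intro a b
    have := (isWeightedHomogeneous_X ℂ W (Sum.inr a)).pow b
    simpa [W] using this
  have hvd : IsWeightedHomogeneous W (Vdm n k) (∑ b : Fin k, (b : ℕ) * wn) := by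
    rw [Vdm_eq]
    apply det_hom
    intro a b
    exact hX a b
  have hdet : IsWeightedHomogeneous W (Mmat g i).det
      (∑ b : Fin k, if b = i then D else (b : ℕ) * wn) := by
    apply det_hom
    intro a b
    simp only [Mmat]
    split_ifs
    · intro x hx
      obtain ⟨u, rfl, hu⟩ := coeff_rename_ne_zero _ _ _ hx
      rw [← hg hu]
      rw [Finsupp.weight_apply, Finsupp.weight_apply, Finsupp.sum_mapDomain_index]
      · apply Finsupp.sum_congr
        rintro (y | y) _ <;> simp [W]
      · simp
      · intros; simp [add_mul]
    · exact hX a b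
  have e1 : ∑ b : Fin k, (b : ℕ) * wn = i * wn + ∑ b ∈ Finset.univ.erase i, (b : ℕ) * wn :=
    (Finset.add_sum_erase _ _ (Finset.mem_univ i)).symm
  have e2 : (∑ b : Fin k, if b = i then D else (b : ℕ) * wn) =
      D + ∑ b ∈ Finset.univ.erase i, (b : ℕ) * wn := by
    rw [← Finset.add_sum_erase _ _ (Finset.mem_univ i), if_pos rfl]
    congr 1
    apply Finset.sum_congr rfl
    intro b hb
    rw [if_neg (Finset.ne_of_mem_erase hb)]
  have hc := comp_mul W hvd V (Finsupp.weight W m)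
  by_contra hne
  rw [mul_comm, ← hV, weightedHomogeneousComponent_of_mem hdet, if_neg (by omega)] at hc
  have h0 := (mul_eq_zero.mp hc.symm).resolve_left (Vdm_ne n k)
  apply hm
  have := congrArg (coeff m) h0
  rwa [coeff_weightedHomogeneousComponent, if_pos rfl, coeff_zero] at this

theorem card_diff {k ℓ : ℕ} (β : Fin k → Fin ℓ) (hmono : Monotone β)
    (hsurj : Function.Surjective β) :
    Fintype.card {a : Fin k // ∃ h : (a : ℕ) + 1 < k, β a = β ⟨a + 1, h⟩} + ℓ = k := by
  classical
  have h1 : Fintype.card {a : Fin k // ¬ ∃ h : (a : ℕ) + 1 < k, β a = β ⟨a + 1, h⟩} = ℓ := by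
    refine Eq.trans ?_ (Fintype.card_fin ℓ)
    apply Fintype.card_of_bijective (f := fun a => β a.1)
    constructor
    · have key : ∀ a b : Fin k, (¬ ∃ h : (a : ℕ) + 1 < k, β a = β ⟨a + 1, h⟩) → β a = β b →
          ¬ a < b := by
        intro a b ha hab hlt
        have hk : (a : ℕ) + 1 < k := by have := b.2; have : (a : ℕ) < b := hlt; omega
        refine ha ⟨hk, le_antisymm (hmono ?_) ?_⟩
        · exact Fin.le_def.mpr (Nat.le_succ _)
        · rw [hab]; exact hmono (Fin.le_def.mpr hlt)
      rintro ⟨a, ha⟩ ⟨b, hb⟩ hab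
      exact Subtype.ext (le_antisymm (not_lt.mp (key b a hb hab.symm)) (not_lt.mp (key a b ha hab)))
    · intro m
      obtain ⟨a0, ha0⟩ := hsurj m
      obtain ⟨a, ha, hmax⟩ := Finset.exists_max_image (Finset.univ.filter fun a => β a = m) id
        ⟨a0, by simp [ha0]⟩
      have ham : β a = m := by simpa using ha
      refine ⟨⟨a, ?_⟩, ham⟩
      rintro ⟨h, hb⟩
      have := hmax ⟨a + 1, h⟩ (by simp [← hb, ham])
      have : (a : ℕ) + 1 ≤ a := Fin.le_def.mp this
      omega
  have h2 := Fintype.card_subtype_compl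
    (fun a : Fin k => ∃ h : (a : ℕ) + 1 < k, β a = β ⟨a + 1, h⟩)
  have h3 := Fintype.card_subtype_le
    (fun a : Fin k => ∃ h : (a : ℕ) + 1 < k, β a = β ⟨a + 1, h⟩)
  rw [Fintype.card_fin] at h2 h3
  rw [h1] at h2
  omega

theorem count_arith (n p q k ℓ c : ℕ) (hn : 0 < n) (hnp : n < p) (hq : q = p - n + 1) (hk : 0 < k)
    (hkl : (p : ℤ) - (k : ℤ) * ((p : ℤ) - (n : ℤ) + 1) + (ℓ : ℤ) = 0) (hcd : c + ℓ = k) :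
    q * (k - 1 + 1 - 1) + c = n - 1 + k := by
  obtain ⟨k, rfl⟩ : ∃ k', k = k' + 1 := ⟨k - 1, by omega⟩
  have hq' : (q : ℤ) = p - n + 1 := by omega
  rw [← hq'] at hkl
  have h1 : ((k + 1 : ℕ) : ℤ) * q = ((q * k : ℕ) : ℤ) + q := by push_cast; ring
  rw [h1] at hkl
  simp only [Nat.add_sub_cancel]
  omega

end Application

/-- the weighted Bezout formula
`w₁⋯w_{n−1}·wₙ^ℓ · dim_ℂ ℂ[x,z₁,…,z_k]/J_Δ(f,P) = ∏_{j=1}^{q} ∏_{i=1}^{k−1} (d_j − i·wₙ)`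
for the ideal `J_Δ(f,P)` generated by the `Vᵢᵏ(f_j)` (`1 ≤ i ≤ k−1`, `1 ≤ j ≤ q`)
together with the differences `z_a − z_{a+1}` over indices `a` with `a, a+1` in the
same block of the partition `P = (r₁,…,r_ℓ)` of `k` (blocks encoded as the fibers of
the monotone block-collapse map `β : Fin k → Fin ℓ` with fiber sizes `r`). -/
theorem stmt1 (n p : ℕ) (hn : 0 < n) (hnp : n < p)
    (q : ℕ) (hq : q = p - n + 1)
    (f : Fin q → MvPolynomial (Fin (n - 1) ⊕ Unit) ℂ)
    (d : Fin q → ℕ) (w : Fin (n - 1) → ℕ) (wn : ℕ)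
    (hw : ∀ m, 0 < w m) (hwn : 0 < wn)
    (hf : ∀ j, (f j).IsWeightedHomogeneous (Sum.elim w fun _ => wn) (d j))
    (k ℓ : ℕ) (r : Fin ℓ → ℕ)
    (hr1 : ∀ m, 1 ≤ r m) (hrmono : Antitone r) (hrsum : ∑ m, r m = k)
    (hkl : (p : ℤ) - (k : ℤ) * ((p : ℤ) - (n : ℤ) + 1) + (ℓ : ℤ) = 0)
    (β : Fin k → Fin ℓ) (hβmono : Monotone β)
    (hβcard : ∀ m, (Finset.univ.filter fun a => β a = m).card = r m)
    (V : Fin q → Fin k → MvPolynomial (Fin (n - 1) ⊕ Fin k) ℂ)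
    (hV : ∀ j i, (Mmat (f j) i).det = V j i * Vdm n k)
    (J : Ideal (MvPolynomial (Fin (n - 1) ⊕ Fin k) ℂ))
    (hJ : J = Ideal.span
      ({P | ∃ (j : Fin q) (i : Fin k), (i : ℕ) ≠ 0 ∧ P = V j i} ∪
       {P | ∃ (a : ℕ) (h : a + 1 < k),
          β ⟨a, Nat.lt_of_succ_lt h⟩ = β ⟨a + 1, h⟩ ∧
          P = (X (Sum.inr ⟨a, Nat.lt_of_succ_lt h⟩) :
                MvPolynomial (Fin (n - 1) ⊕ Fin k) ℂ) - X (Sum.inr ⟨a + 1, h⟩)}))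
    (hfin : FiniteDimensional ℂ (MvPolynomial (Fin (n - 1) ⊕ Fin k) ℂ ⧸ J)) :
    ((∏ m, w m : ℕ) : ℤ) * (wn : ℤ) ^ ℓ *
        (Module.finrank ℂ (MvPolynomial (Fin (n - 1) ⊕ Fin k) ℂ ⧸ J) : ℤ) =
      ∏ j, ∏ i ∈ Finset.Icc 1 (k - 1), ((d j : ℤ) - (i : ℤ) * (wn : ℤ)) := by
  classical
  set W : Fin (n - 1) ⊕ Fin k → ℕ := Sum.elim w fun _ : Fin k => wn with hW
  have hWpos : ∀ i, 0 < W i := by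
    rintro (i | i)
    · exact hw i
    · exact hwn
  have hk : 0 < k := by
    rcases Nat.eq_zero_or_pos k with rfl | h
    · simp at hkl; omega
    · exact h
  have hsurj : Function.Surjective β := by
    intro m
    have h1 : 0 < (Finset.univ.filter fun a => β a = m).card := by
      rw [hβcard]; exact hr1 m
    obtain ⟨a, ha⟩ := Finset.card_pos.mp h1
    exact ⟨a, by simpa using ha⟩
  have hcd := card_diff β hβmono hsurj
  have hVw : ∀ j i m, coeff m (V j i) ≠ 0 → Finsupp.weight W m + i * wn = d j :=
    fun j i m hm => V_weight w wn (f j) (d j) (hf j) i (V j i) (hV j i) m hm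
  let gi : Finset.Icc 1 (k - 1) → Fin k := fun i =>
    ⟨i, by have := Finset.mem_Icc.mp i.2; omega⟩
  by_cases hA : ∃ (j : Fin q) (i : Finset.Icc 1 (k - 1)), d j = i * wn ∧ V j (gi i) ≠ 0
  · obtain ⟨j, i, hd, hne⟩ := hA
    obtain ⟨m, hm⟩ := ne_zero_iff.mp hne
    have hm0 : ∀ m, coeff m (V j (gi i)) ≠ 0 → m = 0 := by
      intro m hm
      by_contra h0
      have h1 := hVw j (gi i) m hm
      have h2 := weight_pos W hWpos m h0
      simp only [gi] at h1
      omega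
    have hVC : V j (gi i) = C (coeff 0 (V j (gi i))) := by
      ext m
      rw [coeff_C]
      split_ifs with h
      · rw [h]
      · by_contra hc
        exact h (hm0 m hc).symm
    have hc0 : coeff 0 (V j (gi i)) ≠ 0 := by rw [← hm0 m hm]; exact hm
    have hmem : V j (gi i) ∈ J := by
      rw [hJ]
      apply Ideal.subset_span
      refine Or.inl ⟨j, gi i, ?_, rfl⟩
      have := Finset.mem_Icc.mp i.2
      simp only [gi]; omega
    have htop : J = ⊤ := by
      apply Ideal.eq_top_of_isUnit_mem _ hmem
      rw [hVC]
      exact (isUnit_iff_ne_zero.mpr hc0).map C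
    have hsub : Subsingleton (MvPolynomial (Fin (n - 1) ⊕ Fin k) ℂ ⧸ J) :=
      Ideal.Quotient.subsingleton_iff.mpr htop
    rw [Module.finrank_zero_of_subsingleton, Nat.cast_zero, mul_zero]
    symm
    apply Finset.prod_eq_zero (Finset.mem_univ j)
    apply Finset.prod_eq_zero i.2
    rw [hd]; push_cast; ring
  · push Not at hA
    let ι := (Fin q × Finset.Icc 1 (k - 1)) ⊕
      {a : Fin k // ∃ h : (a : ℕ) + 1 < k, β a = β ⟨a + 1, h⟩}
    let F : ι → MvPolynomial (Fin (n - 1) ⊕ Fin k) ℂ := Sum.elim (fun x => V x.1 (gi x.2))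
      (fun a => X (Sum.inr a.1) - X (Sum.inr ⟨a.1 + 1, a.2.choose⟩))
    let e : ℕ → ι → ℕ := fun t => Sum.elim
      (fun x => if V x.1 (gi x.2) = 0 then t else d x.1 - x.2 * wn) (fun _ => wn)
    have hgt : ∀ j (i : Finset.Icc 1 (k - 1)), V j (gi i) ≠ 0 → (i : ℕ) * wn < d j := by
      intro j i hne
      obtain ⟨m, hm⟩ := ne_zero_iff.mp hne
      have h1 := hVw j (gi i) m hm
      have h2 : d j ≠ i * wn := fun h => hne (hA j i h)
      simp only [gi] at h1
      omega
    have hJF : J = Ideal.span (Set.range F) := by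
      rw [hJ]
      congr 1
      ext P
      constructor
      · rintro (⟨j, i, hi, rfl⟩ | ⟨a, h, hab, rfl⟩)
        · exact ⟨Sum.inl (j, ⟨i, Finset.mem_Icc.mpr (by have := i.2; omega)⟩), rfl⟩
        · exact ⟨Sum.inr ⟨⟨a, Nat.lt_of_succ_lt h⟩, h, hab⟩, rfl⟩
      · rintro ⟨(⟨j, i⟩ | ⟨a, h, hab⟩), rfl⟩
        · refine Or.inl ⟨j, gi i, ?_, rfl⟩
          have := Finset.mem_Icc.mp i.2
          simp only [gi]; omega
        · exact Or.inr ⟨a, h, hab, rfl⟩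
    have hcard : Fintype.card ι = Fintype.card (Fin (n - 1) ⊕ Fin k) := by
      simp only [ι, Fintype.card_sum, Fintype.card_prod, Fintype.card_fin, Fintype.card_coe,
        Nat.card_Icc]
      exact count_arith n p q k ℓ _ hn hnp hq hk hkl hcd
    have hB : ∀ t, 0 < t → (∏ i, W i) *
        Module.finrank ℂ (MvPolynomial (Fin (n - 1) ⊕ Fin k) ℂ ⧸ J) = ∏ i, e t i := by
      intro t ht
      subst hJF
      apply bezout W hWpos F (e t) _ _ hcard hfin
      · rintro (⟨j, i⟩ | a)
        · simp only [e, Sum.elim_inl]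
          split_ifs with h
          · exact ht
          · have := hgt j i h
            omega
        · exact hwn
      · rintro (⟨j, i⟩ | a)
        · simp only [e, F, Sum.elim_inl]
          split_ifs with h
          · rw [h]; exact isWeightedHomogeneous_zero _ _ _
          · intro m hm
            have := hVw _ _ _ hm
            simp only [gi] at this
            omega
        · exact (weightedHomogeneousSubmodule ℂ W wn).sub_mem
            (isWeightedHomogeneous_X ℂ W _) (isWeightedHomogeneous_X ℂ W _)
    have hne : ∀ j (i : Finset.Icc 1 (k - 1)), V j (gi i) ≠ 0 := by
      intro j i h0
      have h12 : ∏ i, e 1 i = ∏ i, e 2 i := by rw [← hB 1 one_pos, ← hB 2 two_pos]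
      refine absurd h12 (ne_of_lt (Finset.prod_lt_prod ?_ ?_ ?_))
      · rintro (⟨j, i⟩ | a) _
        · simp only [e, Sum.elim_inl]
          split_ifs with h
          · exact one_pos
          · have := hgt j i h
            omega
        · exact hwn
      · rintro (⟨j, i⟩ | a) _
        · simp only [e, Sum.elim_inl]
          split_ifs with h <;> omega
        · exact le_rfl
      · exact ⟨Sum.inl (j, i), Finset.mem_univ _, by simp [e, h0]⟩
    have hfinal := hB 1 one_pos
    have hpe : ((∏ i, e 1 i : ℕ) : ℤ) =
        (∏ j, ∏ i ∈ Finset.Icc 1 (k - 1), ((d j : ℤ) - (i : ℤ) * (wn : ℤ))) *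
        (wn : ℤ) ^ Fintype.card {a : Fin k // ∃ h : (a : ℕ) + 1 < k, β a = β ⟨a + 1, h⟩} := by
      rw [Fintype.prod_sum_type, Fintype.prod_prod_type]
      simp only [e, Sum.elim_inl, Sum.elim_inr, Finset.prod_const, Finset.card_univ]
      push_cast
      congr 1
      apply Finset.prod_congr rfl
      intro j _
      rw [← Finset.prod_coe_sort (Finset.Icc 1 (k - 1))
        (fun i => (d j : ℤ) - (i : ℤ) * (wn : ℤ))]
      apply Finset.prod_congr rfl
      intro i _
      rw [if_neg (hne j i), Nat.cast_sub (hgt j i (hne j i)).le]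
      push_cast; rfl
    have hpw : ∏ i, W i = (∏ m, w m) * wn ^ k := by
      rw [Fintype.prod_sum_type]
      simp [W]
    have hz := congrArg (Nat.cast : ℕ → ℤ) hfinal
    rw [hpe, hpw] at hz
    have hwk : (wn : ℤ) ^ k = (wn : ℤ) ^ ℓ *
        (wn : ℤ) ^ Fintype.card {a : Fin k // ∃ h : (a : ℕ) + 1 < k, β a = β ⟨a + 1, h⟩} := by
      rw [← pow_add, add_comm ℓ, hcd]
    have hwz : (wn : ℤ) ≠ 0 := by exact_mod_cast hwn.ne'
    apply mul_right_cancel₀ (pow_ne_zero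
      (Fintype.card {a : Fin k // ∃ h : (a : ℕ) + 1 < k, β a = β ⟨a + 1, h⟩}) hwz)
    rw [← hz]
    push_cast
    rw [hwk]
    ring
end

section
/- (Bezout's theorem for weighted homogeneous complete intersections.) Let N ≥ 1, let (v_1,…,v_N) be positive integer weights, and let p_1,…,p_N ∈ ℂ[y_1,…,y_N] be polynomials such that each p_i is weighted homogeneous of positive degree D_i with respect to (v_1,…,v_N). If the quotient ring ℂ[y_1,…,y_N]/(p_1,…,p_N) is finite-dimensional as a ℂ-vector space, then v_1⋯v_N · dim_ℂ (ℂ[y_1,…,y_N]/(p_1,…,p_N)) = D_1⋯D_N. -/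
open MvPolynomial

section LocalPart

open IsLocalRing

variable {R : Type*} [CommRing R]

/-- `x` is a nonzerodivisor modulo `I`. -/
def RegMod (I : Ideal R) (x : R) : Prop := ∀ u, u * x ∈ I → u ∈ I

/-- Krull dimension of the quotient at most `n`. -/
def DimLE (n : ℕ) (I : Ideal R) : Prop := ringKrullDim (R ⧸ I) ≤ (n : WithBot ℕ∞)

/-- Recursive Cohen-Macaulay type condition. -/
def CMn [IsLocalRing R] : ℕ → Ideal R → Prop
  | 0, _ => True
  | n + 1, I => ∃ x ∈ maximalIdeal R, RegMod I x ∧ DimLE n (I ⊔ Ideal.span {x}) ∧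
      CMn n (I ⊔ Ideal.span {x})

lemma mem_sup_span {I : Ideal R} {x u : R} :
    u ∈ I ⊔ Ideal.span {x} ↔ ∃ i ∈ I, ∃ w, u = i + w * x := by
  constructor
  · intro h
    obtain ⟨i, hi, y, hy, rfl⟩ := Submodule.mem_sup.1 h
    obtain ⟨w, rfl⟩ := Ideal.mem_span_singleton'.1 hy
    exact ⟨i, hi, w, rfl⟩
  · rintro ⟨i, hi, w, rfl⟩
    exact Submodule.add_mem_sup hi (Ideal.mem_span_singleton'.2 ⟨w, rfl⟩)

lemma RegMod.swap_right {I : Ideal R} {x b : R} (hx : RegMod I x)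
    (hb : RegMod (I ⊔ Ideal.span {x}) b) : RegMod (I ⊔ Ideal.span {b}) x := by
  intro u hu
  obtain ⟨i, hi, w, hw⟩ := mem_sup_span.1 hu
  have h1 : w * b ∈ I ⊔ Ideal.span {x} :=
    mem_sup_span.2 ⟨-i, I.neg_mem hi, u, by rw [hw]; ring⟩
  obtain ⟨i', hi', w', hw'⟩ := mem_sup_span.1 (hb _ h1)
  have h2 : (u - w' * b) * x ∈ I := by
    have : (u - w' * b) * x = i + i' * b := by
      rw [sub_mul, hw, hw']; ring
    rw [this]
    exact I.add_mem hi (I.mul_mem_right _ hi')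
  exact mem_sup_span.2 ⟨_, hx _ h2, w', by ring⟩

lemma RegMod.swap_left [IsLocalRing R] [IsNoetherianRing R] {I : Ideal R} {x b : R}
    (hxm : x ∈ maximalIdeal R) (hx : RegMod I x)
    (hb : RegMod (I ⊔ Ideal.span {x}) b) : RegMod I b := by
  let K : Ideal R :=
    { carrier := {u | u * b ∈ I}
      add_mem' := fun {u v} hu hv => by
        simp only [Set.mem_ofPred_eq, add_mul] at *
        exact I.add_mem hu hv
      zero_mem' := by simp
      smul_mem' := fun c u hu => by
        simp only [Set.mem_ofPred_eq, smul_eq_mul, mul_assoc] at *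
        exact I.mul_mem_left _ hu }
  have hK : ∀ u, u ∈ K ↔ u * b ∈ I := fun u => Iff.rfl
  have key : K ≤ I := by
    refine Submodule.le_of_le_smul_of_le_jacobson_bot (I := maximalIdeal R)
      (IsNoetherian.noetherian K) (maximalIdeal_le_jacobson _) ?_
    intro u hu
    have h1 : u * b ∈ I ⊔ Ideal.span {x} := Ideal.mem_sup_left ((hK u).1 hu)
    obtain ⟨i, hi, w, hw⟩ := mem_sup_span.1 (hb _ h1)
    have h2 : w ∈ K := by
      rw [hK]
      apply hx
      have : w * b * x = u * b - i * b := by rw [hw]; ring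
      rw [this]
      exact I.sub_mem hu (I.mul_mem_right _ hi)
    rw [hw]
    refine Submodule.add_mem_sup hi ?_
    rw [mul_comm]
    exact Submodule.smul_mem_smul hxm h2
  intro u hu
  exact key hu

lemma DimLE.mono_ideal {n : ℕ} {I J : Ideal R} (h : DimLE n I) (hIJ : I ≤ J) : DimLE n J :=
  (ringKrullDim_le_of_surjective (Ideal.Quotient.factor hIJ)
    (Ideal.Quotient.factor_surjective hIJ)).trans h

lemma DimLE.pow_mem [IsLocalRing R] {J : Ideal R} (h : DimLE 0 J) {x : R}
    (hx : x ∈ maximalIdeal R) : ∃ k, x ^ k ∈ J := by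
  have h0 : Ring.KrullDimLE 0 (R ⧸ J) := Ring.krullDimLE_iff.2 h
  rw [Ring.krullDimLE_zero_iff] at h0
  change x ∈ J.radical
  rw [Ideal.radical_eq_sInf, Submodule.mem_sInf]
  rintro P ⟨hJP, hP⟩
  have := Ideal.isPrime_map_quotientMk_of_isPrime hJP
  have hmax := h0 _ this
  have h2 : (Ideal.comap (Ideal.Quotient.mk J) (Ideal.map (Ideal.Quotient.mk J) P)).IsMaximal :=
    Ideal.comap_isMaximal_of_surjective _ Ideal.Quotient.mk_surjective
  have h3 : Ideal.comap (Ideal.Quotient.mk J) (Ideal.map (Ideal.Quotient.mk J) P) = P := by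
    rw [Ideal.comap_map_of_surjective _ Ideal.Quotient.mk_surjective]
    simpa [← RingHom.ker_eq_comap_bot] using hJP
  rw [h3] at h2
  rw [eq_maximalIdeal h2]
  exact hx

/-- going up: adding one generator lowers dimension by at most one -/
lemma DimLE.of_sup [IsLocalRing R] [IsNoetherianRing R] {n : ℕ} {J : Ideal R} {b : R}
    (hb : b ∈ maximalIdeal R) (h : DimLE n (J ⊔ Ideal.span {b})) : DimLE (n + 1) J := by
  unfold DimLE at *
  by_cases hJ : J = ⊤
  · subst hJ
    rw [ringKrullDim_eq_bot_of_subsingleton]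
    exact bot_le
  have : Nontrivial (R ⧸ J) := Ideal.Quotient.nontrivial_iff.2 hJ
  have : IsLocalRing (R ⧸ J) := IsLocalRing.of_surjective' _ Ideal.Quotient.mk_surjective
  have h1 := ringKrullDim_le_ringKrullDim_quotient_add_encard (R := R ⧸ J)
    {Ideal.Quotient.mk J b} (by
      rw [IsLocalRing.ringJacobson_eq_maximalIdeal, Set.singleton_subset_iff]
      have : IsLocalHom (Ideal.Quotient.mk J) :=
        IsLocalHom.of_surjective _ Ideal.Quotient.mk_surjective
      exact map_nonunit (Ideal.Quotient.mk J) b hb)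
  have h2 := ringKrullDim_eq_of_ringEquiv (DoubleQuot.quotQuotEquivQuotSup J (Ideal.span {b}))
  rw [Ideal.map_span, Set.image_singleton] at h2
  rw [h2] at h1
  refine h1.trans ?_
  simp only [Set.encard_singleton]
  push_cast
  gcongr

lemma DimLE.sup_of_notMem [IsLocalRing R] [IsNoetherianRing R] {n : ℕ} {J : Ideal R} {b : R}
    (hb : ∀ P ∈ J.minimalPrimes, P ≠ maximalIdeal R → b ∉ P) (h : DimLE (n + 1) J) :
    DimLE n (J ⊔ Ideal.span {b}) := by
  by_cases hm : maximalIdeal R ∈ J.minimalPrimes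
  · have := IsLocalRing.quotient_artinian_of_mem_minimalPrimes_of_isLocalRing J hm
    have h0 : DimLE 0 J := Ring.krullDimLE_iff.1 inferInstance
    have h1 : DimLE n J := le_trans h0 (by exact_mod_cast Nat.zero_le n)
    exact h1.mono_ideal le_sup_left
  · have h1 := Module.supportDim_quotSMulTop_succ_le_of_notMem_minimalPrimes (R := R)
      (M := R ⧸ J) (x := b) (by
        rw [Ideal.annihilator_quotient]
        intro P hP
        exact hb P hP (fun h => hm (h ▸ hP)))
    have e : QuotSMulTop b (R ⧸ J) ≃ₗ[R] (R ⧸ (J ⊔ Ideal.span {b})) := by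
      refine (Submodule.quotEquivOfEq _ _ ?_).trans
        (Submodule.quotientQuotientEquivQuotientSup J (Ideal.span {b}))
      rw [← Submodule.ideal_span_singleton_smul]
      rw [show (⊤ : Submodule R (R ⧸ J)) = Submodule.map J.mkQ ⊤ by
        rw [Submodule.map_top, Submodule.range_mkQ]]
      rw [← Submodule.map_smul'']
      simp
    rw [Module.supportDim_eq_of_equiv e, Module.supportDim_quotient_eq_ringKrullDim,
      Module.supportDim_quotient_eq_ringKrullDim] at h1
    unfold DimLE at *
    have h2 := h1.trans h
    push_cast at h2
    exact ENat.WithBot.add_le_add_one_right_iff.1 h2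

lemma exists_common_param [IsLocalRing R] [IsNoetherianRing R] {n : ℕ} {J₁ J₂ : Ideal R}
    (h₁ : DimLE (n + 1) J₁) (h₂ : DimLE (n + 1) J₂) :
    ∃ b ∈ maximalIdeal R, DimLE n (J₁ ⊔ Ideal.span {b}) ∧ DimLE n (J₂ ⊔ Ideal.span {b}) := by
  let s : Set (Ideal R) := {P | P ∈ J₁.minimalPrimes ∪ J₂.minimalPrimes ∧ P ≠ maximalIdeal R}
  have hs : s.Finite := ((Ideal.finite_minimalPrimes_of_isNoetherianRing R J₁).union
    (Ideal.finite_minimalPrimes_of_isNoetherianRing R J₂)).subset (fun P hP => hP.1)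
  have hprime : ∀ P ∈ s, P.IsPrime := by
    rintro P ⟨hP | hP, -⟩
    · exact hP.1.1
    · exact hP.1.1
  have hnot : ¬ ((maximalIdeal R : Set R) ⊆ ⋃ P ∈ s, (P : Set R)) := by
    intro h
    obtain ⟨P, hP, hle⟩ := (Ideal.subset_union_prime_finite hs (f := fun P => P) ⊤ ⊤
      (fun P hP _ _ => hprime P hP)).1 h
    exact hP.2 (le_antisymm (le_maximalIdeal (hprime P hP).ne_top) hle)
  obtain ⟨b, hb, hb'⟩ := Set.not_subset.1 hnot
  simp only [Set.mem_iUnion, not_exists] at hb'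
  exact ⟨b, hb, h₁.sup_of_notMem fun P hP hne => hb' P ⟨Or.inl hP, hne⟩,
    h₂.sup_of_notMem fun P hP hne => hb' P ⟨Or.inr hP, hne⟩⟩

/-- Parameters are regular. -/
theorem CMn.regMod [IsLocalRing R] [IsNoetherianRing R] (n : ℕ) : ∀ (I : Ideal R) (a : R),
    CMn (n + 1) I → a ∈ maximalIdeal R → DimLE n (I ⊔ Ideal.span {a}) →
    RegMod I a ∧ CMn n (I ⊔ Ideal.span {a}) := by
  induction n with
  | zero =>
    rintro I a ⟨x, hx, hreg, -, -⟩ ha hdim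
    refine ⟨?_, trivial⟩
    obtain ⟨k, hk⟩ := hdim.pow_mem hx
    obtain ⟨i, hi, w, hw⟩ := mem_sup_span.1 hk
    have hpow : ∀ (k : ℕ) (u : R), u * x ^ k ∈ I → u ∈ I := by
      intro k
      induction k with
      | zero => intro u hu; simpa using hu
      | succ k ih => intro u hu; exact ih u (hreg _ (by rwa [mul_assoc, ← pow_succ]))
    intro u hu
    apply hpow k
    rw [hw, show u * (i + w * a) = u * i + w * (u * a) by ring]
    exact I.add_mem (I.mul_mem_left _ hi) (I.mul_mem_left _ hu)
  | succ n ih =>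
    rintro I a ⟨x, hx, hreg, hdx, hcm⟩ ha hda
    obtain ⟨b, hb, hb1, hb2⟩ := exists_common_param hdx hda
    obtain ⟨r1, c1⟩ := ih _ b hcm hb hb1
    have r2 : RegMod I b := RegMod.swap_left hx hreg r1
    have r3 : RegMod (I ⊔ Ideal.span {b}) x := RegMod.swap_right hreg r1
    have e1 : I ⊔ Ideal.span {x} ⊔ Ideal.span {b} = I ⊔ Ideal.span {b} ⊔ Ideal.span {x} :=
      sup_right_comm _ _ _
    have e2 : I ⊔ Ideal.span {a} ⊔ Ideal.span {b} = I ⊔ Ideal.span {b} ⊔ Ideal.span {a} :=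
      sup_right_comm _ _ _
    have c2 : CMn (n + 1) (I ⊔ Ideal.span {b}) := ⟨x, hx, r3, e1 ▸ hb1, e1 ▸ c1⟩
    obtain ⟨r4, c4⟩ := ih _ a c2 ha (e2 ▸ hb2)
    exact ⟨RegMod.swap_left hb r2 r4, b, hb, RegMod.swap_right r2 r4, hb2, e2 ▸ c4⟩

end LocalPart

section GradedPart

variable {N : ℕ} (v : Fin N → ℕ)

/-- The ideal is stable under taking weighted homogeneous components. -/
def HomI (I : Ideal (MvPolynomial (Fin N) ℂ)) : Prop :=
  ∀ g ∈ I, ∀ e, weightedHomogeneousComponent v e g ∈ I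

lemma homI_span (s : Set (MvPolynomial (Fin N) ℂ))
    (hs : ∀ f ∈ s, ∃ d, IsWeightedHomogeneous v f d) : HomI v (Ideal.span s) := by
  let := weightedGradedAlgebra ℂ v
  intro g hg e
  have h := Ideal.homogeneous_span (weightedHomogeneousSubmodule ℂ v) s hs e hg
  have h2 : ((DirectSum.decompose (weightedHomogeneousSubmodule ℂ v) g) e :
      MvPolynomial (Fin N) ℂ) = weightedHomogeneousComponent v e g := decompose'_apply ℂ v g e
  rwa [h2] at h

lemma component_mul {a f : MvPolynomial (Fin N) ℂ} {D : ℕ} (hf : IsWeightedHomogeneous v f D)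
    (n : ℕ) : weightedHomogeneousComponent v n (a * f) =
      if D ≤ n then weightedHomogeneousComponent v (n - D) a * f else 0 := by
  let := weightedGradedAlgebra ℂ v
  have h := DirectSum.coe_decompose_mul_of_right_mem (weightedHomogeneousSubmodule ℂ v)
    (a := a) n ((mem_weightedHomogeneousSubmodule ℂ v D f).2 hf)
  have h2 : ∀ g e, ((DirectSum.decompose (weightedHomogeneousSubmodule ℂ v) g) e :
      MvPolynomial (Fin N) ℂ) = weightedHomogeneousComponent v e g :=
    fun g e => decompose'_apply ℂ v g e
  rw [h2, h2] at h
  exact h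

/-- Hilbert function of the quotient -/
noncomputable def hilb (I : Ideal (MvPolynomial (Fin N) ℂ)) (d : ℕ) : ℤ :=
  (Module.finrank ℂ (weightedHomogeneousSubmodule ℂ v d) : ℤ) -
    Module.finrank ℂ (weightedHomogeneousSubmodule ℂ v d ⊓ I.restrictScalars ℂ : Submodule ℂ _)

lemma finrank_map_inj {V W : Type*} [AddCommGroup V] [Module ℂ V] [AddCommGroup W] [Module ℂ W]
    (φ : V →ₗ[ℂ] W) (hφ : Function.Injective φ) (p : Submodule ℂ V) :
    Module.finrank ℂ (p.map φ) = Module.finrank ℂ p :=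
  (LinearEquiv.finrank_eq (Submodule.equivMapOfInjective φ hφ p)).symm

variable {v}

lemma hilb_sup (hv : ∀ i, 0 < v i) {I : Ideal (MvPolynomial (Fin N) ℂ)} (hI : HomI v I)
    {f : MvPolynomial (Fin N) ℂ} (hf0 : f ≠ 0) {D : ℕ} (hf : IsWeightedHomogeneous v f D)
    (hreg : ∀ u e, IsWeightedHomogeneous v u e → u * f ∈ I → u ∈ I) (d : ℕ) :
    hilb v (I ⊔ Ideal.span {f}) d = hilb v I d - if D ≤ d then hilb v I (d - D) else 0 := by
  have hfd : ∀ e, FiniteDimensional ℂ (weightedHomogeneousSubmodule ℂ v e) := fun e =>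
    Module.Finite.iff_fg.2 (weightedHomogeneousSubmodule_fg ℂ v (fun i => (hv i).ne') e)
  have hfd2 : ∀ e, FiniteDimensional ℂ
      (weightedHomogeneousSubmodule ℂ v e ⊓ I.restrictScalars ℂ : Submodule ℂ _) := fun e =>
    Submodule.finiteDimensional_of_le (inf_le_left)
  have hcomp : ∀ g ∈ weightedHomogeneousSubmodule ℂ v d, g ∈ I ⊔ Ideal.span {f} →
      ∃ i ∈ I, ∃ w, i.IsWeightedHomogeneous v d ∧ g = i + if D ≤ d then
        weightedHomogeneousComponent v (d - D) w * f else 0 := by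
    intro g hg hgI
    obtain ⟨i, hi, w, hw⟩ := mem_sup_span.1 hgI
    refine ⟨weightedHomogeneousComponent v d i, hI _ hi d, w,
      weightedHomogeneousComponent_isWeightedHomogeneous _ _, ?_⟩
    rw [← component_mul v hf, ← map_add, ← hw]
    exact (weightedHomogeneousComponent_eq_self hg).symm
  split_ifs with hD
  · let φ : MvPolynomial (Fin N) ℂ →ₗ[ℂ] MvPolynomial (Fin N) ℂ := LinearMap.mulRight ℂ f
    have hφ : Function.Injective φ := mul_left_injective₀ hf0
    have e1 : (weightedHomogeneousSubmodule ℂ v d ⊓ I.restrictScalars ℂ) ⊔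
        (weightedHomogeneousSubmodule ℂ v (d - D)).map φ =
        weightedHomogeneousSubmodule ℂ v d ⊓ (I ⊔ Ideal.span {f}).restrictScalars ℂ := by
      apply le_antisymm
      · apply sup_le
        · exact inf_le_inf le_rfl (fun x hx => Ideal.mem_sup_left hx)
        · rintro _ ⟨u, hu, rfl⟩
          refine ⟨?_, Ideal.mem_sup_right (Ideal.mem_span_singleton'.2 ⟨u, rfl⟩)⟩
          have := IsWeightedHomogeneous.mul hu hf
          rwa [Nat.sub_add_cancel hD] at this
      · rintro g ⟨hg, hgI⟩
        obtain ⟨i, hi, w, hid, rfl⟩ := hcomp g hg hgI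
        rw [if_pos hD]
        exact Submodule.add_mem_sup ⟨hid, hi⟩
          ⟨_, weightedHomogeneousComponent_isWeightedHomogeneous _ _, rfl⟩
    have e2 : (weightedHomogeneousSubmodule ℂ v d ⊓ I.restrictScalars ℂ) ⊓
        (weightedHomogeneousSubmodule ℂ v (d - D)).map φ =
        (weightedHomogeneousSubmodule ℂ v (d - D) ⊓ I.restrictScalars ℂ).map φ := by
      apply le_antisymm
      · rintro _ ⟨⟨_, h2⟩, ⟨u, hu, rfl⟩⟩
        exact ⟨u, ⟨hu, hreg u _ hu h2⟩, rfl⟩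
      · rintro _ ⟨u, ⟨hu, huI⟩, rfl⟩
        refine ⟨⟨?_, I.mul_mem_right _ huI⟩, ⟨u, hu, rfl⟩⟩
        have := IsWeightedHomogeneous.mul hu hf
        rwa [Nat.sub_add_cancel hD] at this
    have h := Submodule.finrank_sup_add_finrank_inf_eq
      (weightedHomogeneousSubmodule ℂ v d ⊓ I.restrictScalars ℂ)
      ((weightedHomogeneousSubmodule ℂ v (d - D)).map φ)
    rw [e1, e2, finrank_map_inj φ hφ, finrank_map_inj φ hφ] at h
    unfold hilb
    zify at h
    linarith
  · have e1 : weightedHomogeneousSubmodule ℂ v d ⊓ (I ⊔ Ideal.span {f}).restrictScalars ℂ =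
        weightedHomogeneousSubmodule ℂ v d ⊓ I.restrictScalars ℂ := by
      apply le_antisymm
      · rintro g ⟨hg, hgI⟩
        obtain ⟨i, hi, w, hid, rfl⟩ := hcomp g hg hgI
        rw [if_neg hD, add_zero]
        exact ⟨hid, hi⟩
      · exact inf_le_inf le_rfl (fun x hx => Ideal.mem_sup_left hx)
    unfold hilb
    rw [e1, sub_zero]

lemma finrank_biSup {V ι : Type*} [AddCommGroup V] [Module ℂ V] [FiniteDimensional ℂ V]
    [DecidableEq ι] (W : ι → Submodule ℂ V) (hW : iSupIndep W) (s : Finset ι) :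
    Module.finrank ℂ (⨆ i ∈ s, W i : Submodule ℂ V) = ∑ i ∈ s, Module.finrank ℂ (W i) := by
  induction s using Finset.induction_on with
  | empty => simp
  | insert a s ha ih =>
    rw [Finset.sum_insert ha, ← ih, Finset.iSup_insert]
    have h := Submodule.finrank_sup_add_finrank_inf_eq (W a) (⨆ i ∈ s, W i)
    have hd : Disjoint (W a) (⨆ i ∈ s, W i) := by
      refine (hW a).mono_right ?_
      refine iSup₂_le fun i hi => ?_
      exact le_iSup₂_of_le i (fun h => ha (h ▸ hi)) le_rfl
    rw [hd.eq_bot, finrank_bot] at h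
    simpa using h

lemma exists_poly (hv : ∀ i, 0 < v i) {I : Ideal (MvPolynomial (Fin N) ℂ)} (hI : HomI v I)
    (hfin : FiniteDimensional ℂ (MvPolynomial (Fin N) ℂ ⧸ I)) :
    ∃ Q : Polynomial ℤ, (Q : PowerSeries ℤ) = PowerSeries.mk (hilb v I) ∧
      Q.eval 1 = Module.finrank ℂ (MvPolynomial (Fin N) ℂ ⧸ I) := by
  classical
  have hfd : ∀ e, FiniteDimensional ℂ (weightedHomogeneousSubmodule ℂ v e) := fun e =>
    Module.Finite.iff_fg.2 (weightedHomogeneousSubmodule_fg ℂ v (fun i => (hv i).ne') e)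
  let π : MvPolynomial (Fin N) ℂ →ₗ[ℂ] (MvPolynomial (Fin N) ℂ ⧸ I) :=
    (Ideal.Quotient.mkₐ ℂ I).toLinearMap
  have hπ : ∀ x, π x = 0 ↔ x ∈ I := fun x => Ideal.Quotient.eq_zero_iff_mem
  let W : ℕ → Submodule ℂ (MvPolynomial (Fin N) ℂ ⧸ I) := fun d =>
    (weightedHomogeneousSubmodule ℂ v d).map π
  have hWh : ∀ d, hilb v I d = Module.finrank ℂ (W d) := by
    intro d
    have h := LinearMap.finrank_range_add_finrank_ker
      (π.domRestrict (weightedHomogeneousSubmodule ℂ v d))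
    have h1 : (π.domRestrict (weightedHomogeneousSubmodule ℂ v d)).range = W d :=
      LinearMap.range_domRestrict _ _
    have h2 : Module.finrank ℂ (π.domRestrict (weightedHomogeneousSubmodule ℂ v d)).ker =
        Module.finrank ℂ
          (weightedHomogeneousSubmodule ℂ v d ⊓ I.restrictScalars ℂ : Submodule ℂ _) := by
      rw [← Submodule.finrank_map_subtype_eq]
      suffices h3 : Submodule.map (weightedHomogeneousSubmodule ℂ v d).subtype
          (π.domRestrict (weightedHomogeneousSubmodule ℂ v d)).ker =
          weightedHomogeneousSubmodule ℂ v d ⊓ I.restrictScalars ℂ by rw [h3]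
      ext x
      simp only [Submodule.mem_map, LinearMap.mem_ker, LinearMap.domRestrict_apply,
        Submodule.mem_inf, Submodule.restrictScalars_mem, hπ]
      constructor
      · rintro ⟨y, hy, rfl⟩
        exact ⟨y.2, hy⟩
      · rintro ⟨h1, h2⟩
        exact ⟨⟨x, h1⟩, h2, rfl⟩
    rw [h1, h2] at h
    unfold hilb
    zify at h
    linarith
  have hind : iSupIndep W := by
    rw [iSupIndep_iff_finsetSum_eq_zero_imp_eq_zero]
    intro s w hw hsum i hi
    have hw' : ∀ i ∈ s, ∃ g, g.IsWeightedHomogeneous v i ∧ π g = w i := fun i hi => hw i hi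
    choose! g hg hgw using hw'
    have h1 : ∑ j ∈ s, g j ∈ I := by
      rw [← hπ, map_sum, ← hsum]
      exact Finset.sum_congr rfl hgw
    have h2 := hI _ h1 i
    rw [map_sum, Finset.sum_eq_single_of_mem i hi] at h2
    · rw [weightedHomogeneousComponent_eq_self (hg i hi)] at h2
      rw [← hgw i hi, hπ]
      exact h2
    · intro j hj hne
      exact IsWeightedHomogeneous.weightedHomogeneousComponent_ne i (hg j hj) hne.symm
  have hfs : {i | W i ≠ ⊥}.Finite := WellFoundedGT.finite_ne_bot_of_iSupIndep hind
  let s : Finset ℕ := hfs.toFinset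
  have hs : ∀ d, d ∉ s → W d = ⊥ := by
    intro d hd
    by_contra h
    exact hd (hfs.mem_toFinset.2 h)
  have htop : (⨆ d ∈ s, W d) = ⊤ := by
    rw [eq_top_iff]
    intro x _
    obtain ⟨g, rfl⟩ := Ideal.Quotient.mk_surjective x
    change π g ∈ _
    rw [← sum_weightedHomogeneousComponent v g,
      finsum_eq_sum _ (weightedHomogeneousComponent_finsupp g), map_sum]
    refine Submodule.sum_mem _ fun d _ => ?_
    have hmem : π (weightedHomogeneousComponent v d g) ∈ W d :=
      ⟨_, weightedHomogeneousComponent_isWeightedHomogeneous _ _, rfl⟩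
    by_cases hd : d ∈ s
    · exact (le_iSup₂_of_le (f := fun d (_ : d ∈ s) => W d) d hd le_rfl) hmem
    · rw [hs d hd, Submodule.mem_bot] at hmem
      rw [hmem]
      exact Submodule.zero_mem _
  refine ⟨∑ d ∈ s, Polynomial.monomial d (hilb v I d), ?_, ?_⟩
  · ext n
    rw [Polynomial.coeff_coe, PowerSeries.coeff_mk, Polynomial.finsetSum_coeff]
    simp only [Polynomial.coeff_monomial]
    rw [Finset.sum_ite_eq']
    split_ifs with h
    · rfl
    · rw [hWh, hs n h, finrank_bot]; rfl
  · rw [Polynomial.eval_finsetSum]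
    simp only [Polynomial.eval_monomial, one_pow, mul_one, hWh]
    rw [← Nat.cast_sum, ← finrank_biSup W hind s, htop, finrank_top]

end GradedPart

section FinalPart

variable {N : ℕ}

/-- the ideal of the origin -/
noncomputable abbrev mIdeal (N : ℕ) : Ideal (MvPolynomial (Fin N) ℂ) :=
  RingHom.ker (constantCoeff : MvPolynomial (Fin N) ℂ →+* ℂ)

instance mIdeal_isMaximal : (mIdeal N).IsMaximal :=
  RingHom.ker_isMaximal_of_surjective _ (fun c => ⟨C c, by simp⟩)

instance mIdeal_isPrime : (mIdeal N).IsPrime := mIdeal_isMaximal.isPrime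

/-- the local ring at the origin -/
abbrev LocRing (N : ℕ) : Type := Localization.AtPrime (mIdeal N)

/-- the localization map -/
noncomputable abbrev locMap (N : ℕ) : MvPolynomial (Fin N) ℂ →+* LocRing N :=
  algebraMap (MvPolynomial (Fin N) ℂ) (LocRing N)

instance locRing_noeth : IsNoetherianRing (LocRing N) :=
  IsLocalization.isNoetherianRing (mIdeal N).primeCompl _ inferInstance

lemma locMap_mem {f : MvPolynomial (Fin N) ℂ} (hf : f ∈ mIdeal N) :
    locMap N f ∈ IsLocalRing.maximalIdeal (LocRing N) :=
  (IsLocalization.AtPrime.to_map_mem_maximal_iff (LocRing N) (mIdeal N) f).2 hf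

/-- ideal generated by the first `j` polynomials -/
noncomputable def Ij (f : Fin N → MvPolynomial (Fin N) ℂ) (j : ℕ) : Ideal (MvPolynomial (Fin N) ℂ) :=
  Ideal.span (f '' {i | i.val < j})

lemma Ij_zero (f : Fin N → MvPolynomial (Fin N) ℂ) : Ij f 0 = ⊥ := by
  simp [Ij]

lemma Ij_top (f : Fin N → MvPolynomial (Fin N) ℂ) : Ij f N = Ideal.span (Set.range f) := by
  simp [Ij]

lemma Ij_succ (f : Fin N → MvPolynomial (Fin N) ℂ) {j : ℕ} (hj : j < N) :
    Ij f (j + 1) = Ij f j ⊔ Ideal.span {f ⟨j, hj⟩} := by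
  rw [Ij, Ij, ← Ideal.span_union]
  congr 1
  have : {i : Fin N | i.val < j + 1} = {i | i.val < j} ∪ {⟨j, hj⟩} := by
    ext i
    simp only [Set.mem_ofPred_eq, Set.mem_union, Set.mem_singleton_iff, Fin.ext_iff]
    omega
  rw [this, Set.image_union, Set.image_singleton]

lemma Ij_le_m (f : Fin N → MvPolynomial (Fin N) ℂ) (hf : ∀ i, f i ∈ mIdeal N) (j : ℕ) :
    Ij f j ≤ mIdeal N := by
  rw [Ij, Ideal.span_le]
  rintro _ ⟨i, -, rfl⟩
  exact hf i

lemma map_Ij_succ (f : Fin N → MvPolynomial (Fin N) ℂ) {j : ℕ} (hj : j < N) :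
    (Ij f (j + 1)).map (locMap N) =
      (Ij f j).map (locMap N) ⊔ Ideal.span {locMap N (f ⟨j, hj⟩)} := by
  rw [Ij_succ f hj, Ideal.map_sup, Ideal.map_span, Set.image_singleton]

lemma dim_zero {I : Ideal (MvPolynomial (Fin N) ℂ)}
    (hfin : FiniteDimensional ℂ (MvPolynomial (Fin N) ℂ ⧸ I)) :
    DimLE 0 (I.map (locMap N)) := by
  have hart : IsArtinianRing (MvPolynomial (Fin N) ℂ ⧸ I) := IsArtinianRing.of_finite ℂ _
  refine Ring.krullDimLE_iff.1 (Ring.krullDimLE_zero_iff.2 fun P hP => ?_)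
  let g : LocRing N →+* (LocRing N ⧸ I.map (locMap N)) := Ideal.Quotient.mk _
  let h : (MvPolynomial (Fin N) ℂ ⧸ I) →+* (LocRing N ⧸ I.map (locMap N)) :=
    Ideal.Quotient.lift I (g.comp (locMap N)) (fun a ha =>
      Ideal.Quotient.eq_zero_iff_mem.2 (Ideal.mem_map_of_mem _ ha))
  have hp1 : (P.comap h).IsPrime := Ideal.IsPrime.comap h
  have hp2 : (P.comap h).IsMaximal := inferInstance
  have hp3 : ((P.comap h).comap (Ideal.Quotient.mk I)).IsMaximal :=
    Ideal.comap_isMaximal_of_surjective _ Ideal.Quotient.mk_surjective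
  have hp4 : (P.comap h).comap (Ideal.Quotient.mk I) = (P.comap g).comap (locMap N) := by
    ext x
    simp [h, g]
  rw [hp4] at hp3
  have hPg : (P.comap g).IsPrime := Ideal.IsPrime.comap g
  have hle : P.comap g ≤ IsLocalRing.maximalIdeal (LocRing N) :=
    IsLocalRing.le_maximalIdeal hPg.ne_top
  have hm : (P.comap g).comap (locMap N) = mIdeal N := by
    refine hp3.eq_of_le mIdeal_isPrime.ne_top ?_
    intro x hx
    exact (IsLocalization.AtPrime.to_map_mem_maximal_iff (LocRing N) (mIdeal N) x).1 (hle hx)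
  have hmax : IsLocalRing.maximalIdeal (LocRing N) ≤ P.comap g := by
    rw [← Localization.AtPrime.map_eq_maximalIdeal, Ideal.map_le_iff_le_comap]
    exact hm.ge
  have heq : P.comap g = IsLocalRing.maximalIdeal (LocRing N) := le_antisymm hle hmax
  have hmaxi : (P.comap g).IsMaximal := heq ▸ IsLocalRing.maximalIdeal.isMaximal _
  have := Ideal.map_comap_of_surjective g Ideal.Quotient.mk_surjective P
  rw [← this]
  refine (Ideal.map_eq_top_or_isMaximal_of_surjective g Ideal.Quotient.mk_surjective
    hmaxi).resolve_left ?_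
  rw [this]
  exact hP.ne_top

lemma dim_Ij (f : Fin N → MvPolynomial (Fin N) ℂ) (hf : ∀ i, f i ∈ mIdeal N)
    (hfin : FiniteDimensional ℂ (MvPolynomial (Fin N) ℂ ⧸ Ideal.span (Set.range f)))
    (k : ℕ) (hk : k ≤ N) : DimLE k ((Ij f (N - k)).map (locMap N)) := by
  induction k with
  | zero =>
    rw [Nat.sub_zero, Ij_top]
    exact dim_zero hfin
  | succ k ih =>
    have h := ih (by omega)
    have hlt : N - (k + 1) < N := by omega
    rw [show N - k = N - (k + 1) + 1 by omega, map_Ij_succ f hlt] at h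
    exact DimLE.of_sup (locMap_mem (hf _)) h

lemma X_mem_m (i : Fin N) : (X i : MvPolynomial (Fin N) ℂ) ∈ mIdeal N := by
  simp [mIdeal, RingHom.mem_ker]

lemma span_X : Ideal.span (Set.range (X : Fin N → MvPolynomial (Fin N) ℂ)) = mIdeal N := by
  apply le_antisymm
  · rw [Ideal.span_le]
    rintro _ ⟨i, rfl⟩
    exact X_mem_m i
  · intro x hx
    rw [← Set.image_univ, mem_ideal_span_X_image]
    intro m hm
    by_contra! h
    have hm0 : m = 0 := by
      ext i
      exact h i (Set.mem_univ i)
    rw [mem_support_iff, hm0] at hm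
    exact hm hx

lemma finrank_m : Module.finrank ℂ (MvPolynomial (Fin N) ℂ ⧸ mIdeal N) = 1 := by
  have hk : mIdeal N = RingHom.ker (aeval (fun _ => (0 : ℂ)) :
      MvPolynomial (Fin N) ℂ →ₐ[ℂ] ℂ) := by
    ext x
    simp [RingHom.mem_ker, aeval_zero']
  have e : (MvPolynomial (Fin N) ℂ ⧸ mIdeal N) ≃ₐ[ℂ] ℂ :=
    (Ideal.quotientEquivAlgOfEq ℂ hk).trans <| Ideal.quotientKerAlgEquivOfSurjective (f := (aeval (fun _ => 0) :
      MvPolynomial (Fin N) ℂ →ₐ[ℂ] ℂ)) (fun c => ⟨C c, by simp⟩)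
  rw [e.toLinearEquiv.finrank_eq, Module.finrank_self]

lemma fin_m : FiniteDimensional ℂ (MvPolynomial (Fin N) ℂ ⧸ mIdeal N) :=
  Module.finite_of_finrank_pos (by rw [finrank_m]; exact one_pos)

lemma fin_X : FiniteDimensional ℂ (MvPolynomial (Fin N) ℂ ⧸
    Ideal.span (Set.range (X : Fin N → MvPolynomial (Fin N) ℂ))) := by
  rw [span_X]
  exact fin_m

lemma reg_X (j : Fin N) : RegMod (Ij X j.val) (X j : MvPolynomial (Fin N) ℂ) := by
  intro u hu
  rw [Ij, mem_ideal_span_X_image] at *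
  intro m hm
  obtain ⟨i, hi, hne⟩ := hu (m + Finsupp.single j 1) (by
    rw [mem_support_iff, coeff_mul_X]
    exact mem_support_iff.1 hm)
  refine ⟨i, hi, ?_⟩
  have hij : j ≠ i := by
    rintro rfl
    exact lt_irrefl j.val (by simpa using hi)
  simpa [Finsupp.single_apply, hij] using hne

lemma RegMod.loc {I : Ideal (MvPolynomial (Fin N) ℂ)} {x : MvPolynomial (Fin N) ℂ}
    (h : RegMod I x) : RegMod (I.map (locMap N)) (locMap N x) := by
  intro u hu
  obtain ⟨⟨a, s⟩, rfl⟩ := IsLocalization.mk'_surjective (mIdeal N).primeCompl u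
  have h1 : locMap N (a * x) ∈ I.map (locMap N) := by
    have := Ideal.mul_mem_left _ (locMap N s) hu
    rw [← mul_assoc, mul_comm (locMap N s), IsLocalization.mk'_spec] at this
    rwa [map_mul]
  obtain ⟨t, ht, htm⟩ := (IsLocalization.algebraMap_mem_map_algebraMap_iff
    (mIdeal N).primeCompl (LocRing N) I _).1 h1
  have h2 : locMap N a ∈ I.map (locMap N) :=
    (IsLocalization.algebraMap_mem_map_algebraMap_iff
      (mIdeal N).primeCompl (LocRing N) I _).2 ⟨t, ht, h _ (by rwa [mul_assoc])⟩
  dsimp only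
  rw [IsLocalization.mk'_eq_mul_mk'_one]
  exact Ideal.mul_mem_right _ _ h2

lemma cm_X (k : ℕ) (hk : k ≤ N) : CMn k ((Ij (X : Fin N → _) (N - k)).map (locMap N)) := by
  induction k with
  | zero => trivial
  | succ k ih =>
    have h := ih (by omega)
    have hd := dim_Ij (X : Fin N → MvPolynomial (Fin N) ℂ) X_mem_m fin_X k (by omega)
    have hlt : N - (k + 1) < N := by omega
    rw [show N - k = N - (k + 1) + 1 by omega, map_Ij_succ _ hlt] at h hd
    exact ⟨_, locMap_mem (X_mem_m _), (reg_X ⟨N - (k + 1), hlt⟩).loc, hd, h⟩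

lemma cm_f (f : Fin N → MvPolynomial (Fin N) ℂ) (hf : ∀ i, f i ∈ mIdeal N)
    (hfin : FiniteDimensional ℂ (MvPolynomial (Fin N) ℂ ⧸ Ideal.span (Set.range f)))
    (j : ℕ) (hj : j ≤ N) : CMn (N - j) ((Ij f j).map (locMap N)) ∧
      ∀ h : j < N, RegMod ((Ij f j).map (locMap N)) (locMap N (f ⟨j, h⟩)) := by
  have key : ∀ j (h : j < N), CMn (N - j) ((Ij f j).map (locMap N)) →
      RegMod ((Ij f j).map (locMap N)) (locMap N (f ⟨j, h⟩)) ∧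
      CMn (N - (j + 1)) ((Ij f (j + 1)).map (locMap N)) := by
    intro j h hcm
    have hd := dim_Ij f hf hfin (N - (j + 1)) (by omega)
    rw [show N - (N - (j + 1)) = j + 1 by omega] at hd
    rw [map_Ij_succ f h] at hd ⊢
    rw [show N - j = N - (j + 1) + 1 by omega] at hcm
    exact CMn.regMod _ _ _ hcm (locMap_mem (hf _)) hd
  have hall : ∀ j ≤ N, CMn (N - j) ((Ij f j).map (locMap N)) := by
    intro j
    induction j with
    | zero =>
      intro _
      have := cm_X N le_rfl
      rw [Nat.sub_self, Ij_zero] at this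
      rwa [Nat.sub_zero, Ij_zero]
    | succ j ih =>
      intro h
      exact (key j (by omega) (ih (by omega))).2
  exact ⟨hall j hj, fun h => (key j h (hall j hj)).1⟩

lemma mem_m_of_hom {v : Fin N → ℕ} {f : MvPolynomial (Fin N) ℂ} {D : ℕ} (hD : 0 < D)
    (hf : IsWeightedHomogeneous v f D) : f ∈ mIdeal N := by
  rw [RingHom.mem_ker, constantCoeff_eq]
  by_contra h
  have := hf h
  simp at this
  omega

lemma reg_global {v : Fin N → ℕ} (hv : ∀ i, 0 < v i) {I : Ideal (MvPolynomial (Fin N) ℂ)}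
    (hI : HomI v I) {f : MvPolynomial (Fin N) ℂ}
    (h : RegMod (I.map (locMap N)) (locMap N f)) (u : MvPolynomial (Fin N) ℂ) (e : ℕ)
    (hu : IsWeightedHomogeneous v u e) (huf : u * f ∈ I) : u ∈ I := by
  have h1 : locMap N u ∈ I.map (locMap N) := by
    apply h
    rw [← map_mul]
    exact Ideal.mem_map_of_mem _ huf
  obtain ⟨s, hs, hsu⟩ := (IsLocalization.algebraMap_mem_map_algebraMap_iff
    (mIdeal N).primeCompl (LocRing N) I _).1 h1
  have h2 := hI _ hsu e
  rw [component_mul v hu, if_pos le_rfl, Nat.sub_self,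
    weightedHomogeneousComponent_zero _ (fun i => (hv i).ne')] at h2
  have hs0 : coeff 0 s ≠ 0 := fun h0 => hs (by
    change s ∈ mIdeal N
    rw [RingHom.mem_ker, constantCoeff_eq]
    exact h0)
  have h3 := I.mul_mem_left (C (coeff 0 s)⁻¹) h2
  rwa [← mul_assoc, ← C_mul, inv_mul_cancel₀ hs0, C_1, one_mul] at h3

lemma series_Ij {v : Fin N → ℕ} (hv : ∀ i, 0 < v i)
    (f : Fin N → MvPolynomial (Fin N) ℂ) (D : Fin N → ℕ) (hD : ∀ i, 0 < D i)
    (hf : ∀ i, (f i).IsWeightedHomogeneous v (D i))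
    (hfin : FiniteDimensional ℂ (MvPolynomial (Fin N) ℂ ⧸ Ideal.span (Set.range f))) :
    PowerSeries.mk (hilb v (Ideal.span (Set.range f))) =
      PowerSeries.mk (hilb v ⊥) * ∏ i, (1 - (PowerSeries.X : PowerSeries ℤ) ^ D i) := by
  have hm : ∀ i, f i ∈ mIdeal N := fun i => mem_m_of_hom (hD i) (hf i)
  have hhom : ∀ j, HomI v (Ij f j) := by
    intro j
    apply homI_span
    rintro _ ⟨i, -, rfl⟩
    exact ⟨_, hf i⟩
  have step : ∀ j (h : j < N), PowerSeries.mk (hilb v (Ij f (j + 1))) =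
      PowerSeries.mk (hilb v (Ij f j)) * (1 - PowerSeries.X ^ D ⟨j, h⟩) := by
    intro j h
    have hr := reg_global hv (hhom j) ((cm_f f hm hfin j h.le).2 h)
    have hf0 : f ⟨j, h⟩ ≠ 0 := by
      intro h0
      have h1 : (1 : MvPolynomial (Fin N) ℂ) ∈ Ij f j :=
        hr 1 0 (isWeightedHomogeneous_one ℂ v) (by rw [h0]; simp)
      have h2 := Ij_le_m f hm j h1
      exact mIdeal_isPrime.ne_top ((Ideal.eq_top_iff_one _).2 h2)
    ext d
    rw [mul_sub, mul_one, map_sub, PowerSeries.coeff_mul_X_pow']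
    simp only [PowerSeries.coeff_mk]
    rw [Ij_succ f h]
    exact hilb_sup hv (hhom j) hf0 (hf _) hr d
  have hall : ∀ j ≤ N, PowerSeries.mk (hilb v (Ij f j)) = PowerSeries.mk (hilb v ⊥) *
      ∏ i ∈ Finset.univ.filter (fun i : Fin N => i.val < j),
        (1 - (PowerSeries.X : PowerSeries ℤ) ^ D i) := by
    intro j
    induction j with
    | zero => intro _; simp [Ij_zero]
    | succ j ih =>
      intro h
      have hins : Finset.univ.filter (fun i : Fin N => i.val < j + 1) =
          insert (⟨j, h⟩ : Fin N) (Finset.univ.filter (fun i : Fin N => i.val < j)) := by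
        ext i
        simp only [Finset.mem_filter, Finset.mem_univ, true_and, Finset.mem_insert, Fin.ext_iff]
        omega
      rw [step j h, ih (by omega), hins, Finset.prod_insert (by simp)]
      ring
  have := hall N le_rfl
  rw [Ij_top] at this
  simpa using this

end FinalPart

/-- Bezout's theorem for weighted homogeneous complete intersections. -/
theorem stmt11 (N : ℕ) (hN : 1 ≤ N) (v : Fin N → ℕ) (hv : ∀ i, 0 < v i)
    (p : Fin N → MvPolynomial (Fin N) ℂ) (D : Fin N → ℕ) (hD : ∀ i, 0 < D i)
    (hp : ∀ i, (p i).IsWeightedHomogeneous v (D i))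
    (hfin : FiniteDimensional ℂ
      (MvPolynomial (Fin N) ℂ ⧸ Ideal.span (Set.range p))) :
    (∏ i, v i) *
        Module.finrank ℂ (MvPolynomial (Fin N) ℂ ⧸ Ideal.span (Set.range p)) =
      ∏ i, D i := by
  have s1 := series_Ij hv p D hD hp hfin
  have s2 := series_Ij hv X v hv (fun i => isWeightedHomogeneous_X ℂ v i) fin_X
  obtain ⟨Q1, hQ1, hQ1e⟩ := exists_poly hv (homI_span v (Set.range p) (by
    rintro _ ⟨i, rfl⟩
    exact ⟨_, hp i⟩)) hfin
  obtain ⟨Q2, hQ2, hQ2e⟩ := exists_poly hv (homI_span v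
    (Set.range (X : Fin N → MvPolynomial (Fin N) ℂ)) (by
      rintro _ ⟨i, rfl⟩
      exact ⟨_, isWeightedHomogeneous_X ℂ v i⟩)) fin_X
  rw [span_X, finrank_m] at hQ2e
  have hpoly : Q1 * ∏ i, (1 - (Polynomial.X : Polynomial ℤ) ^ v i) =
      Q2 * ∏ i, (1 - (Polynomial.X : Polynomial ℤ) ^ D i) := by
    apply Polynomial.coe_injective
    have hc : ∀ E : Fin N → ℕ,
        ((∏ i, (1 - (Polynomial.X : Polynomial ℤ) ^ E i) : Polynomial ℤ) : PowerSeries ℤ) =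
        ∏ i, (1 - (PowerSeries.X : PowerSeries ℤ) ^ E i) := by
      intro E
      rw [← Polynomial.coeToPowerSeries.ringHom_apply, map_prod]
      simp
    rw [Polynomial.coe_mul, Polynomial.coe_mul, hc, hc, hQ1, hQ2, s1, s2]
    ring
  have hgeom : ∀ E : Fin N → ℕ, ∏ i, (1 - (Polynomial.X : Polynomial ℤ) ^ E i) =
      (1 - Polynomial.X) ^ N * ∏ i, ∑ k ∈ Finset.range (E i), (Polynomial.X : Polynomial ℤ) ^ k := by
    intro E
    simp_rw [← mul_neg_geom_sum]
    rw [Finset.prod_mul_distrib]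
    simp
  rw [hgeom, hgeom, mul_left_comm, mul_left_comm Q2] at hpoly
  have hne : (1 - (Polynomial.X : Polynomial ℤ)) ^ N ≠ 0 := by
    apply pow_ne_zero
    intro h
    have := congrArg (Polynomial.eval 0) h
    simp at this
  have h := congrArg (Polynomial.eval 1) (mul_left_cancel₀ hne hpoly)
  simp only [Polynomial.eval_mul, Polynomial.eval_prod, Polynomial.eval_finsetSum,
    Polynomial.eval_pow, Polynomial.eval_X, one_pow, Finset.sum_const, Finset.card_range,
    hQ1e, hQ2e] at h
  simp only [nsmul_eq_mul, mul_one, Nat.cast_one, one_mul] at h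
  rw [mul_comm]
  exact_mod_cast h
end
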